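/- For every n ≥ 5, the general linear group GL_n(ℤ) and the special linear group SL_n(ℤ) are finitely generated and self-simulable. -/

import Mathlib

open scoped Pointwise

namespace SelfSim

/-- The left shift action of a group `G` on the full shift `G → A`:
`(g · x)(h) = x (g⁻¹ h)`. -/
def shift {G A : Type*} [Group G] (g : G) (x : G → A) : G → A := fun h => x (g⁻¹ * h)

/-- A `G`-subshift: a closed, shift-invariant subset of the full shift `G → A`
(`A` carrying its topology, `G → A` the product topology). -/
def IsSubshift {G A : Type*} [Group G] [TopologicalSpace A] (X : Set (G → A)) : Prop :=
  IsClosed X ∧ ∀ (g : G) (x : G → A), x ∈ X → shift g x ∈ X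

/-- A subshift of finite type: there are a finite set `F ⊆ G` and a set `𝓛` of patterns
on `F` such that `x ∈ X` iff every translate of `x` restricted to `F` lies in `𝓛`. -/
def IsSFT {G A : Type*} [Group G] (X : Set (G → A)) : Prop :=
  ∃ (F : Finset G) (L : Set (↥F → A)),
    ∀ x : G → A, x ∈ X ↔ ∀ g : G, (fun h : ↥F => x (g * (h : G))) ∈ L

/-- `φ` is a topological factor map from the shift action on `Z ⊆ G → A` onto the
action `act` of `G` on `Y ⊆ β`: continuous on `Z`, mapping `Z` into and onto `Y`,
and equivariant. -/
def IsFactorMapOnto {G A β : Type*} [Group G] [TopologicalSpace A] [TopologicalSpace β]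
    (Z : Set (G → A)) (φ : (G → A) → β) (act : G → β → β) (Y : Set β) : Prop :=
  ContinuousOn φ Z ∧ Set.MapsTo φ Z Y ∧ Set.SurjOn φ Z Y ∧
    ∀ (g : G) (x : G → A), x ∈ Z → φ (shift g x) = act g (φ x)

/-- A sofic subshift: a topological factor of some subshift of finite type
(over some finite alphabet, which we may take to be `Fin k`). -/
def IsSofic {G A : Type*} [Group G] [TopologicalSpace A] (Y : Set (G → A)) : Prop :=
  ∃ (k : ℕ) (Z : Set (G → Fin k)) (φ : (G → Fin k) → (G → A)),
    IsSFT Z ∧ IsFactorMapOnto Z φ shift Y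

/-- Recursively enumerable predicate. -/
def RE {α : Type*} [Primcodable α] (p : α → Prop) : Prop :=
  Partrec fun a => Part.assert (p a) fun _ => Part.some ()

/-- `x : ℕ → A` begins with the finite word `w`. -/
def ExtendsWord {A : Type*} (x : ℕ → A) (w : List A) : Prop :=
  ∀ i : Fin w.length, x i = w.get i

/-- A closed subset `Z ⊆ A^ℕ` is effectively closed if the set of words whose
cylinder is disjoint from `Z` is recursively enumerable. -/
def EffectivelyClosedSet {A : Type*} [Primcodable A] [TopologicalSpace A]
    (Z : Set (ℕ → A)) : Prop :=
  IsClosed Z ∧ RE fun w : List A => ∀ x : ℕ → A, ExtendsWord x w → x ∉ Z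

/-- `act` defines an action of `G` on the set `X ⊆ β`. -/
def IsActionOn {G β : Type*} [Group G] (act : G → β → β) (X : Set β) : Prop :=
  (∀ g : G, Set.MapsTo (act g) X X) ∧ (∀ x ∈ X, act 1 x = x) ∧
    ∀ (g h : G) (x : β), x ∈ X → act (g * h) x = act g (act h x)

/-- The set representation of the action `act` of `G` on `X ⊆ A^ℕ` with respect to the
finite generating tuple `s : Fin m → G` (playing the role of the generating set `S`):
the set of `y ∈ (A^S)^ℕ` of the form `y(n)(s) = (s · x)(n)` for some `x ∈ X`. -/
def SetRep {G A : Type*} [Group G] {m : ℕ} (s : Fin m → G)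
    (act : G → (ℕ → A) → ℕ → A) (X : Set (ℕ → A)) : Set (ℕ → (Fin m → A)) :=
  {y | ∃ x ∈ X, ∀ i : Fin m, (fun n => y n i) = act (s i) x}

/-- The action `act` of `G` on the closed set `X ⊆ A^ℕ` is effectively closed with respect
to the finite generating tuple `s` (which contains `1` and generates `G` as a monoid):
its set representation is an effectively closed subset of `(A^S)^ℕ`. -/
def IsEffClosedActionWith {G A : Type*} [Group G] [Primcodable A] [TopologicalSpace A]
    {m : ℕ} (s : Fin m → G) (act : G → (ℕ → A) → ℕ → A) (X : Set (ℕ → A)) : Prop :=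
  IsClosed X ∧ IsActionOn act X ∧ (∃ i, s i = 1) ∧
    Submonoid.closure (Set.range s) = ⊤ ∧
    EffectivelyClosedSet (SetRep s act X)

/-- The action `act` of `G` on `X ⊆ A^ℕ` is effectively closed (with respect to some
finite generating set containing `1`). -/
def IsEffClosedAction {G A : Type*} [Group G] [Primcodable A] [TopologicalSpace A]
    (act : G → (ℕ → A) → ℕ → A) (X : Set (ℕ → A)) : Prop :=
  ∃ (m : ℕ) (s : Fin m → G), IsEffClosedActionWith s act X

/-- The action `act` of `G` on `X ⊆ A^ℕ` is a topological factor of some `G`-subshift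
of finite type. -/
def IsFactorOfSFT {G A : Type*} [Group G] [TopologicalSpace A]
    (act : G → (ℕ → A) → ℕ → A) (X : Set (ℕ → A)) : Prop :=
  ∃ (k : ℕ) (Z : Set (G → Fin k)) (φ : (G → Fin k) → (ℕ → A)),
    IsSFT Z ∧ IsFactorMapOnto Z φ act X

/-- A group `G` is (dynamically) self-simulable if every effectively closed action of `G`
on a closed subset of `{0,1}^ℕ` is a topological factor of a `G`-subshift of finite type. -/
def SelfSimulable (G : Type*) [Group G] : Prop :=
  ∀ (X : Set (ℕ → Bool)) (act : G → (ℕ → Bool) → ℕ → Bool),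
    IsEffClosedAction act X → IsFactorOfSFT act X

/-- Amenability via the Følner condition: for every finite `K` and `δ > 0` there is a
nonempty finite `F` with `|KF △ F| ≤ δ |F|`. -/
def Amenable (G : Type*) [Group G] : Prop :=
  ∀ K : Set G, K.Finite → ∀ δ : ℝ, 0 < δ →
    ∃ F : Set G, F.Finite ∧ F.Nonempty ∧
      ((symmDiff (K * F) F).ncard : ℝ) ≤ δ * F.ncard

/-- A finitely generated group is recursively presented: for some finite tuple generating
`G` as a monoid, the set of words evaluating to the identity is recursively enumerable. -/
def RecursivelyPresented (G : Type*) [Group G] : Prop :=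
  ∃ (m : ℕ) (s : Fin m → G), Submonoid.closure (Set.range s) = ⊤ ∧
    RE fun w : List (Fin m) => (w.map s).prod = 1

/-- A finitely generated group has decidable word problem: for some finite tuple generating
`G` as a monoid, the set of words evaluating to the identity is decidable. -/
def DecidableWordProblem (G : Type*) [Group G] : Prop :=
  ∃ (m : ℕ) (s : Fin m → G), Submonoid.closure (Set.range s) = ⊤ ∧
    ComputablePred fun w : List (Fin m) => (w.map s).prod = 1

/-- A pattern coding `c` (a finite list of pairs (word over the generators, letter))
holds in the configuration `x` at position `g`: `x (g ⬝ w̲) = a` for every pair `(w, a)`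
of `c`. This says exactly that `x ∈ g·[c]`. -/
def PCHolds {G A : Type*} [Group G] {m : ℕ} (s : Fin m → G) (x : G → A) (g : G)
    (c : List (List (Fin m) × A)) : Prop :=
  ∀ p ∈ c, x (g * (p.1.map s).prod) = p.2

/-- A `G`-subshift `X ⊆ A^G` is effectively closed by patterns: for some finite generating
tuple `s`, there is a recursively enumerable set `𝒞` of pattern codings such that `X` is the
set of configurations avoiding every translate of every cylinder `[c]`, `c ∈ 𝒞`. -/
def EffClosedByPatterns {G A : Type*} [Group G] [Primcodable A] (X : Set (G → A)) : Prop :=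
  ∃ (m : ℕ) (s : Fin m → G), Submonoid.closure (Set.range s) = ⊤ ∧
    ∃ 𝒞 : Set (List (List (Fin m) × A)), RE (· ∈ 𝒞) ∧
      X = {x : G → A | ∀ (g : G) (c : List (List (Fin m) × A)), c ∈ 𝒞 → ¬ PCHolds s x g c}

/-- Word metric distance associated to a finite tuple `s` generating `G` as a monoid. -/
noncomputable def wordDist {G : Type*} [Group G] {m : ℕ} (s : Fin m → G) (g h : G) : ℕ :=
  sInf {n : ℕ | ∃ w : List (Fin m), w.length = n ∧ (w.map s).prod = g⁻¹ * h}

/-- Two finitely generated groups are quasi-isometric (with respect to word metrics given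
by some finite generating sets). -/
def QuasiIsometric (G₁ G₂ : Type*) [Group G₁] [Group G₂] : Prop :=
  ∃ (m₁ : ℕ) (s₁ : Fin m₁ → G₁) (m₂ : ℕ) (s₂ : Fin m₂ → G₂),
    Submonoid.closure (Set.range s₁) = ⊤ ∧ Submonoid.closure (Set.range s₂) = ⊤ ∧
    ∃ (f : G₂ → G₁) (A B C : ℝ), 1 ≤ A ∧ 0 ≤ B ∧ 0 ≤ C ∧
      (∀ x y : G₂,
        (1 / A) * (wordDist s₂ x y : ℝ) - B ≤ (wordDist s₁ (f x) (f y) : ℝ) ∧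
        (wordDist s₁ (f x) (f y) : ℝ) ≤ A * (wordDist s₂ x y : ℝ) + B) ∧
      ∀ z : G₁, ∃ x : G₂, (wordDist s₁ z (f x) : ℝ) ≤ C

/-- A finitely presented group: a quotient of a finitely generated free group by the
normal closure of finitely many relators. -/
def FinitelyPresentedGroup (G : Type*) [Group G] : Prop :=
  ∃ (m : ℕ) (f : FreeGroup (Fin m) →* G) (R : Finset (FreeGroup (Fin m))),
    Function.Surjective f ∧ f.ker = Subgroup.normalClosure (R : Set (FreeGroup (Fin m)))

/-- A subgroup `Δ ≤ G` is mediated: there is a finite generating set `T` of `G` such that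
`Δ ∩ tΔt⁻¹` is non-amenable for every `t ∈ T`. -/
def Mediated {G : Type*} [Group G] (Δ : Subgroup G) : Prop :=
  ∃ T : Finset G, Subgroup.closure (T : Set G) = ⊤ ∧
    ∀ t ∈ T, ¬ Amenable ↥(Δ ⊓ Subgroup.map (MulAut.conj t).toMonoidHom Δ)

end SelfSim

namespace SelfSim
open Turing

/-- A Turing machine with finitely many states and symbols. -/
structure FM where
  Q : Type
  Γ : Type
  finQ : Finite Q
  finΓ : Finite Γ
  start : Q
  blank : Γ
  δ : Q → Γ → Option (Q × TM0.Stmt Γ)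

/-- A configuration: state, the tape to the left of the head, and the tape from the head on. -/
@[ext] structure FConf (Q Γ : Type) where
  q : Q
  L : ℕ → Γ
  R : ℕ → Γ

/-- Prepend a symbol to a sequence. -/
def scons {Γ : Type} (a : Γ) (u : ℕ → Γ) : ℕ → Γ
  | 0 => a
  | i + 1 => u i

def FConf.app {Q Γ : Type} (c : FConf Q Γ) : Q × TM0.Stmt Γ → FConf Q Γ
  | (q, .move Dir.left) => ⟨q, fun i => c.L (i + 1), scons (c.L 0) c.R⟩
  | (q, .move Dir.right) => ⟨q, scons (c.R 0) c.L, fun i => c.R (i + 1)⟩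
  | (q, .write a) => ⟨q, c.L, scons a (fun i => c.R (i + 1))⟩

def FM.step (M : FM) (c : FConf M.Q M.Γ) : Option (FConf M.Q M.Γ) :=
  (M.δ c.q (c.R 0)).map c.app

def FM.init (M : FM) (l : List M.Γ) : FConf M.Q M.Γ :=
  ⟨M.start, fun _ => M.blank, fun i => l.getD i M.blank⟩

/-- `n`-fold iteration of a partial step function. -/
def It {α : Type*} (f : α → Option α) (a : α) : ℕ → Option α
  | 0 => some a
  | n + 1 => (It f a n).bind f

theorem eval_dom_iff {α : Type*} (f : α → Option α) (a : α) :
    (StateTransition.eval f a).Dom ↔ ∃ n, It f a n = none := by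
  constructor
  · intro h
    obtain ⟨b, hb⟩ := Part.dom_iff_mem.1 h
    obtain ⟨h1, h2⟩ := StateTransition.mem_eval.1 hb
    have : ∃ n, It f a n = some b := by
      clear h2 hb
      induction h1 with
      | refl => exact ⟨0, rfl⟩
      | tail _ hbc ih =>
        obtain ⟨n, hn⟩ := ih
        exact ⟨n + 1, by simp [It, hn]; exact hbc⟩
    obtain ⟨n, hn⟩ := this
    exact ⟨n + 1, by simp [It, hn, h2]⟩
  · rintro ⟨n, hn⟩
    have key : ∀ n b, It f a n = some b → StateTransition.Reaches f a b := by
      intro n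
      induction n with
      | zero => intro b hb; simp [It] at hb; subst hb; exact Relation.ReflTransGen.refl
      | succ n ih =>
        intro b hb
        simp only [It, Option.bind_eq_some_iff] at hb
        obtain ⟨c, hc, hcb⟩ := hb
        exact (ih c hc).tail hcb
    induction n with
    | zero => simp [It] at hn
    | succ n ih =>
      rcases h : It f a n with _ | b
      · exact ih h
      · have h2 : f b = none := by simpa [It, h] using hn
        exact Part.dom_iff_mem.2 ⟨b, StateTransition.mem_eval.2 ⟨key n b h, h2⟩⟩

/-- The machine halts. -/
def FM.Halts (M : FM) (l : List M.Γ) : Prop := ∃ n, It M.step (M.init l) n = none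

/-- The number with binary expansion `1 u`. -/
def binNum (u : List Bool) : ℕ := u.foldl (fun N b => 2 * N + b.toNat) 1

theorem fm_of_tm0 {Γ Λ : Type} [Inhabited Γ] [Finite Γ] [Inhabited Λ] (M : TM0.Machine Γ Λ)
    (S : Finset Λ) (hS : TM0.Supports M (S : Set Λ)) :
    ∃ F : FM, ∃ f : Γ → F.Γ, ∀ l : List Γ, F.Halts (l.map f) ↔ (TM0.eval M l).Dom := by
  classical
  let δ : S → Γ → Option (S × TM0.Stmt Γ) := fun q a =>
    match h : M q a with
    | none => none
    | some (q', s) => some (⟨q', hS.2 h q.2⟩, s)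
  have hδ0 : ∀ (q : S) a, M q a = none → δ q a = none := by
    intro q a h
    simp only [δ]; split
    · rfl
    · next h' => rw [h] at h'; cases h'
  have hδ1 : ∀ (q : S) a q' s (h : M q a = some (q', s)),
      δ q a = some (⟨q', hS.2 h q.2⟩, s) := by
    intro q a q' s h
    simp only [δ]; split
    · next h' => rw [h] at h'; cases h'
    · next h' => rw [h] at h'; cases h'; rfl
  let F : FM := ⟨S, Γ, inferInstance, inferInstance, ⟨default, hS.1⟩, default, δ⟩
  refine ⟨F, fun a => a, fun l => ?_⟩
  have hl : l.map (fun a => a) = l := List.map_id' l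
  rw [hl]
  let tr : TM0.Cfg Γ Λ → FConf S Γ → Prop := fun c d =>
    c.q = d.q ∧ c.Tape.head = d.R 0 ∧ (∀ i, c.Tape.right.nth i = d.R (i + 1)) ∧
      ∀ i, c.Tape.left.nth i = d.L i
  have hresp : StateTransition.Respects (TM0.step M) F.step tr := by
    rintro ⟨q, T⟩ ⟨q', L, R⟩ ⟨h1, h2, h3, h4⟩
    simp only at h1 h2 h3 h4
    subst h1
    rcases h : M q' T.head with _ | ⟨q1, s⟩
    · have e1 : TM0.step M ⟨q', T⟩ = none := by simp [TM0.step, h]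
      rw [e1]
      have := hδ0 q' _ h
      rw [h2] at this
      simp only [FM.step]
      show Option.map _ (δ q' (R 0)) = none
      rw [this]; rfl
    · have hq1 : q1 ∈ S := hS.2 h q'.2
      have this : δ q' T.head = some (⟨q1, hq1⟩, s) := hδ1 q' _ q1 s h
      rw [h2] at this
      have e2 : F.step ⟨q', L, R⟩ = some (FConf.app ⟨q', L, R⟩ (⟨q1, hq1⟩, s)) := by
        simp only [FM.step]
        show Option.map _ (δ q' (R 0)) = _
        rw [this]; rfl
      cases s with
      | move d =>
        have e1 : TM0.step M ⟨q', T⟩ = some ⟨q1, T.move d⟩ := by simp [TM0.step, h]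
        rw [e1]
        refine ⟨_, ?_, Relation.TransGen.single e2⟩
        cases d with
        | left =>
          refine ⟨rfl, ?_, ?_, ?_⟩
          · simpa [FConf.app, scons, Tape.move] using h4 0
          · intro i
            rcases i with _ | i
            · simpa [FConf.app, scons, Tape.move] using h2
            · simpa [FConf.app, scons, Tape.move] using h3 i
          · intro i
            simpa [FConf.app, scons, Tape.move] using h4 (i + 1)
        | right =>
          refine ⟨rfl, ?_, ?_, ?_⟩
          · simpa [FConf.app, scons, Tape.move] using h3 0
          · intro i
            simpa [FConf.app, scons, Tape.move] using h3 (i + 1)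
          · intro i
            rcases i with _ | i
            · simpa [FConf.app, scons, Tape.move] using h2
            · simpa [FConf.app, scons, Tape.move] using h4 i
      | write a =>
        have e1 : TM0.step M ⟨q', T⟩ = some ⟨q1, T.write a⟩ := by simp [TM0.step, h]
        rw [e1]
        refine ⟨_, ?_, Relation.TransGen.single e2⟩
        exact ⟨rfl, rfl, fun i => by simpa [FConf.app, scons, Tape.write] using h3 i,
          fun i => by simpa [FConf.app, scons, Tape.write] using h4 i⟩
  have hinit : tr (TM0.init l) (F.init l) := by
    refine ⟨rfl, ?_, ?_, ?_⟩
    · cases l <;> rfl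
    · intro i
      cases l with
      | nil => simp [TM0.init, Tape.mk₁, Tape.mk₂, Tape.mk', FM.init, F]
      | cons a l => 
        simp [TM0.init, Tape.mk₁, Tape.mk₂, Tape.mk', FM.init, F]
        exact List.getI_eq_getElem?_getD ..
    · intro i
      simp [TM0.init, Tape.mk₁, Tape.mk₂, Tape.mk', FM.init, F]
  have := StateTransition.tr_eval_dom hresp hinit
  rw [eval_dom_iff] at this
  rw [FM.Halts, this]
  simp [TM0.eval]

theorem binNum_append (u : List Bool) (b : Bool) :
    binNum (u ++ [b]) = 2 * binNum u + b.toNat := by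
  simp [binNum]

theorem binNum_pos (u : List Bool) : 0 < binNum u := by
  induction u using List.reverseRecOn with
  | nil => simp [binNum]
  | append_singleton u b ih => rw [binNum_append]; omega

open PartrecToTM2 in
/-- The binary digit symbols of the stack machine. -/
def bitSym : Bool → Γ'
  | false => Γ'.bit0
  | true => Γ'.bit1

open PartrecToTM2 in
theorem trNat_binNum (u : List Bool) :
    trNat (binNum u) = (u.map bitSym).reverse ++ [Γ'.bit1] := by
  induction u using List.reverseRecOn with
  | nil => rfl
  | append_singleton u b ih =>
    rw [binNum_append]
    have hp := binNum_pos u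
    rw [← Num.to_of_nat (binNum u)] at hp
    rw [trNat] at ih ⊢
    cases b
    · have : ((2 * binNum u + false.toNat : ℕ) : Num) = Num.bit0 (binNum u : Num) := by
        rw [← Num.bit0_of_bit0]; push_cast; simp; ring
      rw [this]
      rcases h : (binNum u : Num) with _ | p
      · rw [h] at hp; simp at hp
      · rw [h] at ih
        simp only [List.map_append, List.reverse_append]
        show Γ'.bit0 :: trPosNum p = _
        rw [show trPosNum p = _ from ih]; rfl
    · have : ((2 * binNum u + true.toNat : ℕ) : Num) = Num.bit1 (binNum u : Num) := by
        rw [← Num.bit1_of_bit1]; push_cast; simp; ring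
      rw [this]
      rcases h : (binNum u : Num) with _ | p
      · rw [h] at hp; simp at hp
      · rw [h] at ih
        simp only [List.map_append, List.reverse_append]
        show Γ'.bit1 :: trPosNum p = _
        rw [show trPosNum p = _ from ih]; rfl

open PartrecToTM2 in
theorem exists_fm (p : ℕ → Prop) (hp : REPred p) :
    ∃ (F : FM) (c0 c1 : F.Γ) (bl : Bool → F.Γ), ∀ u : List Bool,
      F.Halts (c0 :: c1 :: u.map bl) ↔ p (binNum u) := by
  classical
  have h1 : Partrec (fun n => (Part.assert (p n) fun _ => Part.some ()).map fun _ => 0 : ℕ →. ℕ) :=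
    Partrec.map hp (Computable.const 0).to₂
  obtain ⟨c, hc⟩ := ToPartrec.Code.exists_code (Nat.Partrec'.part_iff₁.2 h1)
  let _ : Inhabited Λ' := ⟨trNormal c Cont'.halt⟩
  let M : Λ' → TM2.Stmt (fun _ : K' => Γ') Λ' (Option Γ') := tr
  have hsup : TM2.Supports M (codeSupp c Cont'.halt) := tr_supports c Cont'.halt
  have hsup1 := TM2to1.tr_supports M hsup
  have hsup0 := TM1to0.tr_supports _ hsup1
  have hK : Finite K' := Finite.of_injective
    (fun k : K' => (match k with | .main => 0 | .rev => 1 | .aux => 2 | .stack => 3 : Fin 4))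
    (by intro a b h; cases a <;> cases b <;> simp_all)
  have hG : Finite (TM2to1.Γ' K' (fun _ => Γ')) :=
    inferInstanceAs (Finite (Bool × (∀ _ : K', Option Γ')))
  obtain ⟨F, f, hF⟩ := fm_of_tm0 _ _ hsup0
  let g : Γ' → TM2to1.Γ' K' (fun _ => Γ') := fun a =>
    (false, Function.update (fun _ => none) K'.main (some a))
  refine ⟨F, f (true, (g Γ'.cons).2), f (g Γ'.bit1), fun b => f (g (bitSym b)), fun u => ?_⟩
  have h2 := hF (TM2to1.trInit K'.main (trList [binNum u]))
  rw [TM1to0.tr_eval] at h2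
  replace h2 := h2.trans (TM2to1.tr_eval_dom M K'.main (trList [binNum u]))
  have e : (TM2to1.trInit K'.main (trList [binNum u])).map f =
      f (true, (g Γ'.cons).2) :: f (g Γ'.bit1) :: u.map (fun b => f (g (bitSym b))) := by
    simp only [TM2to1.trInit, trList, trNat_binNum, g]
    simp only [List.reverse_append, List.reverse_reverse, List.reverse_cons, List.reverse_nil,
      List.nil_append, List.cons_append]
    refine congrArg (List.cons _) (congrArg (List.cons _) ?_)
    clear h2
    induction u with
    | nil => rfl
    | cons b u ih => exact congrArg (List.cons _) ih
  rw [e] at h2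
  rw [h2]
  have h3 := tr_eval c [binNum u]
  have h4 : (TM2.init K'.main (trList [binNum u]) : TM2.Cfg (fun _ => Γ') Λ' (Option Γ')) =
      init c [binNum u] := by
    simp only [TM2.init, init]
    congr 1
    funext k
    cases k <;> rfl
  rw [TM2.eval]
  simp only [Part.map_Dom]
  rw [h4]
  have h6 : StateTransition.eval (TM2.step M) (init c [binNum u]) = halt <$> c.eval [binNum u] := h3
  rw [h6]
  have h5 := hc ⟨[binNum u], rfl⟩
  rw [show c.eval [binNum u] = _ from h5]
  simp only [Part.map_eq_map, Part.map_Dom]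
  show (∃ _ : p (binNum u), True) ↔ _
  simp
end SelfSim

namespace SelfSim
theorem binNum_inj {u v : List Bool} (h : binNum u = binNum v) : u = v := by
  induction u using List.reverseRecOn generalizing v with
  | nil =>
    rcases List.eq_nil_or_concat v with rfl | ⟨v, b, rfl⟩
    · rfl
    · rw [List.concat_eq_append, binNum_append] at h
      have := binNum_pos v
      simp [binNum] at h this; omega
  | append_singleton u a ih =>
    rcases List.eq_nil_or_concat v with rfl | ⟨v, b, rfl⟩
    · rw [binNum_append] at h
      have := binNum_pos u
      simp [binNum] at h this; omega
    · rw [List.concat_eq_append] at h ⊢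
      rw [binNum_append, binNum_append] at h
      have h1 : binNum u = binNum v ∧ a = b := by cases a <;> cases b <;> simp at h ⊢ <;> omega
      rw [ih h1.1, h1.2]

/-- The prefix of length `k` of a bit sequence. -/
def pre (f : ℕ → Bool) (k : ℕ) : List Bool := (List.range k).map f

theorem pre_succ (f : ℕ → Bool) (k : ℕ) : pre f (k + 1) = pre f k ++ [f k] := by
  simp [pre, List.range_succ]

theorem binNum_pre_div (f : ℕ → Bool) (k e : ℕ) :
    binNum (pre f (k + e)) / 2 ^ e = binNum (pre f k) := by
  induction e with
  | zero => simp
  | succ e ih =>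
    rw [← add_assoc, pre_succ, binNum_append, pow_succ', ← Nat.div_div_eq_div_mul, ← ih]
    congr 1
    cases f (k + e) <;> simp; omega

theorem binNum_pre_lt (f : ℕ → Bool) (k : ℕ) : binNum (pre f k) < 2 ^ (k + 1) := by
  induction k with
  | zero => simp [pre, binNum]
  | succ k ih =>
    rw [pre_succ, binNum_append, pow_succ]
    cases f k <;> simp <;> omega

theorem lt_binNum_pre (f : ℕ → Bool) (k : ℕ) : k < binNum (pre f k) := by
  induction k with
  | zero => simp [pre, binNum]
  | succ k ih => rw [pre_succ, binNum_append]; omega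

/-- The flattening of a sequence of bit vectors. -/
def flat {m : ℕ} [NeZero m] (y : ℕ → (Fin m → Bool)) (n : ℕ) : Bool := y (n / m) (Fin.ofNat m n)

/-- The flattening of a word of bit vectors. -/
def flatW {m : ℕ} (w : List (Fin m → Bool)) : List Bool := w.flatMap List.ofFn

theorem flatW_pre {m : ℕ} [NeZero m] (y : ℕ → (Fin m → Bool)) (L : ℕ) :
    flatW ((List.range L).map y) = pre (flat y) (m * L) := by
  have hm := NeZero.pos m
  induction L with
  | zero => simp [flatW, pre]
  | succ L ih =>
    have : flatW ((List.range (L + 1)).map y) = flatW ((List.range L).map y) ++ List.ofFn (y L) := by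
      simp [flatW, List.range_succ]
    rw [this, ih, mul_add, mul_one, pre, pre, List.range_add, List.map_append]
    congr 1
    apply List.ext_getElem
    · simp
    · intro i h1 h2
      have hi : i < m := by simpa using h1
      simp only [List.getElem_ofFn, List.getElem_map, List.getElem_range, flat]
      have e1 : (m * L + i) / m = L := by
        rw [Nat.mul_add_div hm, Nat.div_eq_of_lt hi, add_zero]
      rw [e1]
      congr 1
      ext
      simp [Nat.mod_eq_of_lt hi]

theorem flatW_inj {m : ℕ} [NeZero m] {w w' : List (Fin m → Bool)} (h : flatW w = flatW w') :
    w = w' := by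
  have hm := NeZero.pos m
  induction w generalizing w' with
  | nil =>
    cases w' with
    | nil => rfl
    | cons a w' =>
      have := congrArg List.length h
      simp [flatW] at this; omega
  | cons a w ih =>
    cases w' with
    | nil =>
      have := congrArg List.length h
      simp [flatW] at this; omega
    | cons b w' =>
      have h' : List.ofFn a ++ flatW w = List.ofFn b ++ flatW w' := by simpa [flatW] using h
      obtain ⟨h1, h2⟩ := List.append_inj h' (by simp)
      rw [ih h2, List.ofFn_injective h1]

theorem length_flatW {m : ℕ} (w : List (Fin m → Bool)) : (flatW w).length = m * w.length := by
  induction w with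
  | nil => simp [flatW]
  | cons a w ih =>
    have : flatW (a :: w) = List.ofFn a ++ flatW w := by simp [flatW]
    rw [this]; simp [ih]; ring

theorem extendsWord_iff {A : Type*} (x : ℕ → A) (w : List A) :
    ExtendsWord x w ↔ w = (List.range w.length).map x := by
  constructor
  · intro h
    apply List.ext_getElem
    · simp
    · intro i h1 h2
      simpa using (h ⟨i, h1⟩).symm
  · intro h i
    have : w[i.1]? = ((List.range w.length).map x)[i.1]? := by rw [← h]
    simpa using this.symm

/-- An effectively closed set of sequences of bit vectors is described by a decidable test
on prefixes. -/
theorem exists_test {m : ℕ} [NeZero m] (Y : Set (ℕ → (Fin m → Bool)))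
    (hY : EffectivelyClosedSet Y) :
    ∃ P : ℕ → Prop, ComputablePred P ∧ ∀ y, y ∈ Y ↔ ∀ k, ¬ P (binNum (pre (flat y) k)) := by
  classical
  obtain ⟨hcl, hre⟩ := hY
  obtain ⟨c, hc⟩ := Nat.Partrec.Code.exists_code.1 hre
  set p : List (Fin m → Bool) → Prop := fun w => ∀ x : ℕ → (Fin m → Bool), ExtendsWord x w → x ∉ Y
    with hp
  let enc : List (Fin m → Bool) → ℕ := fun w => @Encodable.encode _ Primcodable.toEncodable w
  let dec : ℕ → Option (List (Fin m → Bool)) := fun n =>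
    @Encodable.decode _ Primcodable.toEncodable n
  have hed : ∀ w, dec (enc w) = some w := fun w => @Encodable.encodek _ Primcodable.toEncodable w
  have hc1 : ∀ w, p w → ∃ K, ∀ N, K ≤ N →
      (Nat.Partrec.Code.evaln N c (enc w)).isSome := by
    intro w hw
    have : ∃ x, x ∈ Nat.Partrec.Code.eval c (enc w) := by
      rw [hc]
      have h0 := hed w
      simp only [enc, dec] at h0 ⊢
      simp [h0, hw]
    obtain ⟨x, hx⟩ := this
    obtain ⟨K, hK⟩ := Nat.Partrec.Code.evaln_complete.1 hx
    refine ⟨K, fun N hN => ?_⟩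
    have := Nat.Partrec.Code.evaln_mono hN hK
    rw [Option.mem_def] at this
    rw [this]; rfl
  have hc2 : ∀ N u, (Nat.Partrec.Code.evaln N c u).isSome →
      ∃ w, dec u = some w ∧ p w := by
    intro N u h
    obtain ⟨x, hx⟩ := Option.isSome_iff_exists.1 h
    have := Nat.Partrec.Code.evaln_sound hx
    rw [hc] at this
    simp at this
    obtain ⟨w, hw, h2⟩ := this
    exact ⟨w, hw, h2.1⟩
  let num : ℕ → ℕ := fun u => binNum (flatW ((dec u).getD []))
  let P : ℕ → Prop := fun N => ∃ u < N + 1, (Nat.Partrec.Code.evaln N c u).isSome = true ∧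
    ∃ e < N + 1, N / 2 ^ e = num u
  refine ⟨P, ?_, ?_⟩
  · apply PrimrecPred.computablePred
    have hnum : Primrec num := by
      have h1 : Primrec (flatW (m := m)) :=
        Primrec.list_flatMap Primrec.id ((Primrec.dom_finite _).comp Primrec.snd).to₂
      have h2 : Primrec binNum := by
        refine Primrec.list_foldl (h := fun _ (q : ℕ × Bool) => 2 * q.1 + q.2.toNat) Primrec.id
          (Primrec.const 1) ?_
        unfold Primrec₂
        refine Primrec.nat_add.comp (Primrec.nat_mul.comp (Primrec.const 2) ?_) ?_
        · exact Primrec.fst.comp Primrec.snd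
        · exact (Primrec.dom_finite Bool.toNat).comp (Primrec.snd.comp Primrec.snd)
      exact h2.comp (h1.comp (Primrec.option_getD.comp Primrec.decode (Primrec.const [])))
    have hpow : Primrec₂ ((· ^ ·) : ℕ → ℕ → ℕ) := Primrec₂.unpaired'.1 Nat.Primrec.pow
    have hR : PrimrecRel (fun (e : ℕ) (q : ℕ × ℕ) => q.1 / 2 ^ e = num q.2) := by
      refine Primrec.eq.comp ?_ ?_
      · exact Primrec.nat_div.comp (Primrec.fst.comp Primrec.snd)
          (hpow.comp (Primrec.const 2) Primrec.fst)
      · exact hnum.comp (Primrec.snd.comp Primrec.snd)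
    have hR2 : PrimrecRel (fun (u : ℕ) (N : ℕ) => (Nat.Partrec.Code.evaln N c u).isSome = true ∧
        ∃ e < N + 1, N / 2 ^ e = num u) := by
      refine PrimrecPred.and ?_ ?_
      · refine Primrec.eq.comp ?_ (Primrec.const true)
        exact Primrec.option_isSome.comp (Nat.Partrec.Code.primrec_evaln.comp
          ((Primrec.snd.pair (Primrec.const c)).pair Primrec.fst))
      · have hs : Primrec fun q : ℕ × ℕ => q.2 + 1 := Primrec.succ.comp Primrec.snd
        have hq : Primrec fun q : ℕ × ℕ => (q.2, q.1) := Primrec.snd.pair Primrec.fst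
        exact (hR.exists_mem_list.comp (Primrec.list_range.comp hs) hq).of_eq (by simp)
    exact hR2.exists_lt.comp Primrec.succ Primrec.id
  · intro y
    constructor
    · rintro hy k ⟨u, -, h1, e, -, h2⟩
      obtain ⟨w, hw, hpw⟩ := hc2 _ _ h1
      simp only [num, hw, Option.getD_some] at h2
      refine hpw y ?_ hy
      have hek : e ≤ k := by
        by_contra hlt
        have : binNum (pre (flat y) k) / 2 ^ e = 0 := by
          apply Nat.div_eq_of_lt
          exact lt_of_lt_of_le (binNum_pre_lt _ _) (Nat.pow_le_pow_right (by norm_num) (by omega))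
        have := binNum_pos (flatW w)
        omega
      obtain ⟨k', rfl⟩ := Nat.exists_eq_add_of_le' hek
      rw [binNum_pre_div] at h2
      have h3 := binNum_inj h2
      have h4 : k' = m * w.length := by
        have := congrArg List.length h3
        rw [length_flatW] at this
        simpa [pre] using this
      rw [h4, ← flatW_pre] at h3
      exact (extendsWord_iff y w).2 (flatW_inj h3).symm
    · intro h
      by_contra hy
      obtain ⟨L, hL⟩ : ∃ L, p ((List.range L).map y) := by
        have hop : IsOpen Yᶜ := hcl.isOpen_compl
        rw [isOpen_pi_iff] at hop
        obtain ⟨I, U, hU, hsub⟩ := hop y hy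
        obtain ⟨L, hL⟩ := I.bddAbove
        refine ⟨L + 1, fun x hx hxY => ?_⟩
        refine hsub ?_ hxY
        intro i hi
        have hiL : i < L + 1 := Nat.lt_succ_of_le (hL hi)
        have := hx ⟨i, by simpa using hiL⟩
        simp at this
        rw [this]
        exact (hU i hi).2
      obtain ⟨K, hK⟩ := hc1 _ hL
      set u := enc ((List.range L).map y) with hu
      let e := K + u
      have hlt := lt_binNum_pre (flat y) (m * L + e)
      apply h (m * L + e)
      refine ⟨u, by omega, hK _ (by omega), e, by omega, ?_⟩
      rw [binNum_pre_div]
      simp only [num, hu, hed, Option.getD_some, flatW_pre]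
end SelfSim

namespace SelfSim

/-- The state of a row of the computation: length of the tested prefix and two configurations. -/
structure RowSt (M : Bool → FM) where
  t : ℕ
  conf : ∀ b, FConf (M b).Q (M b).Γ

/-- The initial configuration on the first `t` letters of `ℓ`. -/
def initc (M : FM) (ℓ : ℕ → M.Γ) (t : ℕ) : FConf M.Q M.Γ :=
  ⟨M.start, fun _ => M.blank, fun i => if i < t then ℓ i else M.blank⟩

/-- The row update: the machine `true` may not halt; if the machine `false` halts, both restart on
a longer prefix; otherwise both make one step. -/
def Next (M : Bool → FM) (ℓ : ∀ b, ℕ → (M b).Γ) (ρ ρ' : RowSt M) : Prop :=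
  (M true).step (ρ.conf true) ≠ none ∧
    (((M false).step (ρ.conf false) = none ∧ ρ'.t = ρ.t + 1 ∧
        ∀ b, ρ'.conf b = initc (M b) (ℓ b) (ρ.t + 1)) ∨
      ((∀ b, (M b).step (ρ.conf b) = some (ρ'.conf b)) ∧ ρ'.t = ρ.t))

theorem dyn_sound (M : Bool → FM) (ℓ : ∀ b, ℕ → (M b).Γ) (P : ℕ → Prop)
    (h1 : ∀ k, (∃ n, It (M true).step (initc (M true) (ℓ true) (k + 2)) n = none) ↔ P k)
    (h0 : ∀ k, (∃ n, It (M false).step (initc (M false) (ℓ false) (k + 2)) n = none) ↔ ¬ P k)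
    (ρ : ℕ → RowSt M) (hρ0 : (ρ 0).t = 2) (hρ1 : ∀ b, (ρ 0).conf b = initc (M b) (ℓ b) 2)
    (hρ : ∀ j, Next M ℓ (ρ j) (ρ (j + 1))) (k : ℕ) : ¬ P k := by
  classical
  have key : ∀ k j, (ρ j).t = k + 2 → (∀ b, (ρ j).conf b = initc (M b) (ℓ b) (k + 2)) →
      ¬ P k ∧ ∃ j', (ρ j').t = (k + 1) + 2 ∧
        ∀ b, (ρ j').conf b = initc (M b) (ℓ b) ((k + 1) + 2) := by
    intro k j ht hc
    have run : ∀ n, (∀ n' < n, (M false).step ((ρ (j + n')).conf false) ≠ none) →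
        (ρ (j + n)).t = k + 2 ∧
          ∀ b, It (M b).step (initc (M b) (ℓ b) (k + 2)) n = some ((ρ (j + n)).conf b) := by
      intro n
      induction n with
      | zero => intro _; exact ⟨ht, fun b => by rw [It, ← hc b]; rfl⟩
      | succ n ih =>
        intro hn
        obtain ⟨e1, e2⟩ := ih fun n' h => hn n' (by omega)
        rcases (hρ (j + n)).2 with ⟨h, _⟩ | ⟨h, h'⟩
        · exact absurd h (hn n (by omega))
        · refine ⟨h'.trans e1, fun b => ?_⟩
          rw [It, e2 b]
          exact h b
    have hex : ∃ n, (M false).step ((ρ (j + n)).conf false) = none := by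
      by_contra hne
      push Not at hne
      have r := fun n => (run n fun n' _ => hne n').2
      by_cases hP : P k
      · obtain ⟨n, hn⟩ := (h1 k).2 hP
        rw [r n true] at hn; cases hn
      · obtain ⟨n, hn⟩ := (h0 k).2 hP
        rw [r n false] at hn; cases hn
    have hn := Nat.find_spec hex
    obtain ⟨e1, e2⟩ := run (Nat.find hex) fun n' h => Nat.find_min hex h
    set n := Nat.find hex
    refine ⟨(h0 k).1 ⟨n + 1, by rw [It, e2 false]; exact hn⟩, j + n + 1, ?_⟩
    rcases (hρ (j + n)).2 with ⟨_, h2, h3⟩ | ⟨h, _⟩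
    · refine ⟨by rw [h2, e1], fun b => ?_⟩
      rw [h3 b, e1]
    · rw [h false] at hn; cases hn
  have all : ∀ k, ∃ j, (ρ j).t = k + 2 ∧ ∀ b, (ρ j).conf b = initc (M b) (ℓ b) (k + 2) := by
    intro k
    induction k with
    | zero => exact ⟨0, hρ0, hρ1⟩
    | succ k ih =>
      obtain ⟨j, h1, h2⟩ := ih
      exact (key k j h1 h2).2
  obtain ⟨j, h1, h2⟩ := all k
  exact (key k j h1 h2).1

theorem dyn_complete (M : Bool → FM) (ℓ : ∀ b, ℕ → (M b).Γ)
    (h1 : ∀ k, ¬ ∃ n, It (M true).step (initc (M true) (ℓ true) (k + 2)) n = none) :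
    ∃ ρ : ℕ → RowSt M, (ρ 0).t = 2 ∧ (∀ b, (ρ 0).conf b = initc (M b) (ℓ b) 2) ∧
      ∀ j, Next M ℓ (ρ j) (ρ (j + 1)) := by
  classical
  let Good : RowSt M → Prop := fun ρ => ∃ k n, ρ.t = k + 2 ∧
    ∀ b, It (M b).step (initc (M b) (ℓ b) (k + 2)) n = some (ρ.conf b)
  have hstep : ∀ ρ, Good ρ → ∃ ρ', Next M ℓ ρ ρ' ∧ Good ρ' := by
    rintro ρ ⟨k, n, ht, hc⟩
    have hne : (M true).step (ρ.conf true) ≠ none := by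
      intro h
      apply h1 k
      exact ⟨n + 1, by rw [It, hc true]; exact h⟩
    by_cases hf : (M false).step (ρ.conf false) = none
    · refine ⟨⟨ρ.t + 1, fun b => initc (M b) (ℓ b) (ρ.t + 1)⟩,
        ⟨hne, Or.inl ⟨hf, rfl, fun b => rfl⟩⟩, k + 1, 0, by simp [ht], fun b => ?_⟩
      rw [It, ht]
    · have hall : ∀ b, ∃ c, (M b).step (ρ.conf b) = some c := by
        intro b
        apply Option.ne_none_iff_exists'.1
        cases b <;> assumption
      choose c hcc using hall
      refine ⟨⟨ρ.t, c⟩, ⟨hne, Or.inr ⟨hcc, rfl⟩⟩, k, n + 1, ht, fun b => ?_⟩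
      rw [It, hc b]
      exact hcc b
  choose f hf1 hf2 using hstep
  let ρ0 : {ρ // Good ρ} := ⟨⟨2, fun b => initc (M b) (ℓ b) 2⟩, 0, 0, rfl, fun b => rfl⟩
  let s : ℕ → {ρ // Good ρ} := fun j => Nat.rec ρ0 (fun _ r => ⟨f r.1 r.2, hf2 r.1 r.2⟩) j
  exact ⟨fun j => (s j).1, rfl, fun b => rfl, fun j => hf1 (s j).1 (s j).2⟩

/-- The column data of a cell. -/
structure ColSt (m : ℕ) where
  y : Fin m → Bool
  ctr : Fin m
  pc : Fin 3
  g1 : Bool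
  g2 : Bool

/-- The machine data of a cell. -/
structure MC (M : FM) where
  q : M.Q
  a : M.Γ
  l : M.Γ
  r : M.Γ

/-- A cell of the computation grid. -/
structure Cell (D : Type) (m : ℕ) (M : Bool → FM) where
  v : D
  st : ColSt m
  inK : Bool
  mc : ∀ b, MC (M b)

instance finite_colSt (m : ℕ) : Finite (ColSt m) :=
  Finite.of_injective (fun s : ColSt m => (s.y, s.ctr, s.pc, s.g1, s.g2))
    (by rintro ⟨⟩ ⟨⟩ h; simp at h; simp [h])

instance finite_mc (M : FM) : Finite (MC M) :=
  have := M.finQ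
  have := M.finΓ
  Finite.of_injective (fun s : MC M => (s.q, s.a, s.l, s.r))
    (by rintro ⟨⟩ ⟨⟩ h; simp at h; simp [h])

instance finite_cell (D : Type) [Finite D] (m : ℕ) (M : Bool → FM) : Finite (Cell D m M) :=
  Finite.of_injective (fun s : Cell D m M => (s.v, s.st, s.inK, s.mc))
    (by rintro ⟨⟩ ⟨⟩ h; simp at h; simp [h])

/-- Letter of the input tape determined by the column data. -/
def colLetter {Γ : Type} {m : ℕ} (c0 c1 : Γ) (bl : Bool → Γ) (s : ColSt m) : Γ :=
  if s.pc = 0 then c0 else if s.pc = 1 then c1 else bl s.g2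

/-- The `i`-th letter of the input tape. -/
def tapeLetter {Γ : Type} (c0 c1 : Γ) (bl : Bool → Γ) (f : ℕ → Bool) : ℕ → Γ
  | 0 => c0
  | 1 => c1
  | i + 2 => bl (f i)

/-- Cell in an initial row. -/
def MInit (M : FM) (let0 : M.Γ) (inK : Bool) (w : MC M) : Prop :=
  w.q = M.start ∧ w.l = M.blank ∧ w.r = if inK = true then let0 else M.blank

/-- Step rule on a window. -/
def MStep (M : FM) (s : M.Q × Turing.TM0.Stmt M.Γ) (w x w' x' : MC M) : Prop :=
  w'.q = s.1 ∧
    match s.2 with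
    | .move .left => w'.l = x.l ∧ x'.r = w.r
    | .move .right => w'.r = x.r ∧ x'.l = w.l
    | .write _ => w'.l = w.l ∧ x'.r = x.r

/-- Step rule in the leftmost column. -/
def MStepL (M : FM) (s : M.Q × Turing.TM0.Stmt M.Γ) (w w' : MC M) : Prop :=
  match s.2 with
  | .move .left => w'.r = w.l
  | .move .right => w'.l = w.r
  | .write a => w'.r = a

section rules
variable {D : Type} {m : ℕ} [NeZero m] (M : Bool → FM) (c0 c1 : ∀ b, (M b).Γ)
  (bl : ∀ b, Bool → (M b).Γ) (π : D → (Fin m → Bool))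

/-- Rule of the bottom row. -/
def BotRule (w : Cell D m M) : Prop :=
  w.st.y = π w.v ∧ w.inK = decide (w.st.pc ≠ 2) ∧
    ∀ b, MInit (M b) (colLetter (c0 b) (c1 b) (bl b) w.st) w.inK (w.mc b)

/-- Rule of the leftmost column. -/
def LeftRule (w w' : Cell D m M) : Prop :=
  w.st.ctr = 0 ∧ w.st.pc = 0 ∧ (∀ b, (w.mc b).a = (w.mc b).r) ∧
    (((M false).δ (w.mc false).q (w.mc false).a = none ∧ w'.inK = true) ∨
      ∀ b, ∃ s, (M b).δ (w.mc b).q (w.mc b).a = some s ∧ MStepL (M b) s (w.mc b) (w'.mc b))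

/-- Rule for windows. -/
def WinRule (w x w' x' : Cell D m M) : Prop :=
  (x.v = w'.v ∧ w'.st = w.st ∧ x.st.ctr = w.st.ctr + 1 ∧ (w.st.ctr + 1 ≠ 0 → x.st.y = w.st.y) ∧
    x.st.pc = (if w.st.pc = 0 then 1 else 2) ∧ x.st.g1 = w.st.y w.st.ctr ∧ x.st.g2 = w.st.g1) ∧
  (∀ b, (x.mc b).q = (w.mc b).q ∧ (x.mc b).a = (w.mc b).a) ∧
  (M true).δ (w.mc true).q (w.mc true).a ≠ none ∧
  (((M false).δ (w.mc false).q (w.mc false).a = none ∧ x'.inK = w.inK ∧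
      ∀ b, MInit (M b) (colLetter (c0 b) (c1 b) (bl b) w'.st) w'.inK (w'.mc b)) ∨
    ((∀ b, ∃ s, (M b).δ (w.mc b).q (w.mc b).a = some s ∧
      MStep (M b) s (w.mc b) (x.mc b) (w'.mc b) (x'.mc b)) ∧ w'.inK = w.inK))

end rules

/-- A grid obeying the three kinds of rules. -/
def ValidGrid {C : Type} (Bot : C → Prop) (Lf : C → C → Prop) (R : C → C → C → C → Prop)
    (c : ℕ → ℕ → C) : Prop :=
  (∀ i, Bot (c i 0)) ∧ (∀ j, Lf (c 0 j) (c 0 (j + 1))) ∧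
    ∀ i j, R (c i j) (c (i + 1) j) (c i (j + 1)) (c (i + 1) (j + 1))

theorem initc_eq (M : FM) (c0 c1 : M.Γ) (bl : Bool → M.Γ) (f : ℕ → Bool) (k : ℕ) :
    initc M (tapeLetter c0 c1 bl f) (k + 2) = M.init (c0 :: c1 :: (pre f k).map bl) := by
  simp only [initc, FM.init]
  congr 1
  funext i
  rcases i with _ | _ | i
  · simp [tapeLetter]
  · simp [tapeLetter]
  · by_cases h : i < k
    · simp [tapeLetter, pre, h]
    · simp [pre, h]

end SelfSim

namespace SelfSim

section
variable {D : Type} {m : ℕ} [NeZero m] (M : Bool → FM) (c0 c1 : ∀ b, (M b).Γ)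
  (bl : ∀ b, Bool → (M b).Γ) (π : D → (Fin m → Bool))

theorem grid_sound_static (c : ℕ → ℕ → Cell D m M)
    (hc : ValidGrid (BotRule M c0 c1 bl π) (LeftRule M) (WinRule M c0 c1 bl) c) :
    ∃ z : ℕ → D, (∀ i j, (c i j).v = z (i + j)) ∧ ∃ y : ℕ → (Fin m → Bool),
      (∀ n, π (z n) = y (n / m)) ∧ (∀ i j, ((c i j).st.pc ≠ 2) ↔ i < 2) ∧
      ∀ i j b, colLetter (c0 b) (c1 b) (bl b) (c i j).st =
        tapeLetter (c0 b) (c1 b) (bl b) (flat y) i := by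
  obtain ⟨hB, hL, hW⟩ := hc
  have hm := NeZero.pos m
  have hv : ∀ j i, (c i j).v = (c (i + j) 0).v := by
    intro j
    induction j with
    | zero => intro i; rfl
    | succ j ih =>
      intro i
      rw [← (hW i j).1.1, ih (i + 1)]
      congr 2; omega
  have hst : ∀ j i, (c i j).st = (c i 0).st := by
    intro j
    induction j with
    | zero => intro i; rfl
    | succ j ih => intro i; rw [(hW i j).1.2.1, ih i]
  let σ : ℕ → ColSt m := fun i => (c i 0).st
  have hs := fun i => (hW i 0).1.2.2
  have hctr : ∀ i, (σ i).ctr = Fin.ofNat m i := by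
    intro i
    induction i with
    | zero => rw [show (σ 0).ctr = 0 from (hL 0).1]; ext; simp
    | succ i ih =>
      rw [show (σ (i + 1)).ctr = (σ i).ctr + 1 from (hs i).1, ih]
      ext; simp [Fin.val_add]
  have hy1 : ∀ k r, r < m → (σ (m * k + r)).y = (σ (m * k)).y := by
    intro k r
    induction r with
    | zero => intro _; rfl
    | succ r ih =>
      intro hr
      rw [← ih (by omega)]
      refine (hs (m * k + r)).2.1 ?_
      rw [show (c (m * k + r) 0).st.ctr = _ from hctr _]
      intro h
      have := congrArg Fin.val h
      simp [Fin.val_add, Nat.add_assoc] at this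
      rw [Nat.mod_eq_of_lt hr] at this
      omega
  let y : ℕ → (Fin m → Bool) := fun k => (σ (m * k)).y
  have hy : ∀ i, (σ i).y = y (i / m) := by
    intro i
    conv_lhs => rw [← Nat.div_add_mod i m]
    exact hy1 _ _ (Nat.mod_lt _ hm)
  have hpc : ∀ i, (σ i).pc = if i = 0 then 0 else if i = 1 then 1 else 2 := by
    intro i
    induction i with
    | zero => exact (hL 0).2.1
    | succ i ih =>
      rw [show (σ (i + 1)).pc = _ from (hs i).2.2.1, show (c i 0).st.pc = _ from ih]
      rcases i with _ | _ | i <;> simp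
  have hg1 : ∀ i, (σ (i + 1)).g1 = flat y i := by
    intro i
    rw [show (σ (i + 1)).g1 = (σ i).y (σ i).ctr from (hs i).2.2.2.1, hy, hctr]
    rfl
  have hg2 : ∀ i, (σ (i + 2)).g2 = flat y i := by
    intro i
    rw [← hg1]
    exact (hs (i + 1)).2.2.2.2
  refine ⟨fun n => (c n 0).v, fun i j => hv j i, y, fun n => ?_, fun i j => ?_, fun i j b => ?_⟩
  · rw [← (hB n).1]; exact hy n
  · rw [hst, show (c i 0).st.pc = _ from hpc i]
    rcases i with _ | _ | i <;> simp
  · rw [hst]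
    show colLetter _ _ _ (σ i) = _
    unfold colLetter
    rw [hpc]
    rcases i with _ | _ | i
    · simp [tapeLetter]
    · simp [tapeLetter]
    · simp [tapeLetter, hg2]

theorem FM.step_eq (M : FM) {c c' : FConf M.Q M.Γ} {s} (h : M.δ c.q (c.R 0) = some s)
    (h' : c' = c.app s) : M.step c = some c' := by
  rw [FM.step, h, h']; rfl

theorem grid_sound_dyn (c : ℕ → ℕ → Cell D m M)
    (hc : ValidGrid (BotRule M c0 c1 bl π) (LeftRule M) (WinRule M c0 c1 bl) c)
    (ℓ : ∀ b, ℕ → (M b).Γ) (hpc : ∀ i j, ((c i j).st.pc ≠ 2) ↔ i < 2)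
    (hℓ : ∀ i j b, colLetter (c0 b) (c1 b) (bl b) (c i j).st = ℓ b i) :
    ∃ ρ : ℕ → RowSt M, (ρ 0).t = 2 ∧ (∀ b, (ρ 0).conf b = initc (M b) (ℓ b) 2) ∧
      ∀ j, Next M ℓ (ρ j) (ρ (j + 1)) := by
  obtain ⟨hB, hL, hW⟩ := hc
  have hq : ∀ j b i, ((c i j).mc b).q = ((c 0 j).mc b).q := by
    intro j b i
    induction i with
    | zero => rfl
    | succ i ih => rw [((hW i j).2.1 b).1, ih]
  have ha : ∀ j b i, ((c i j).mc b).a = ((c 0 j).mc b).r := by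
    intro j b i
    induction i with
    | zero => exact (hL j).2.2.1 b
    | succ i ih => rw [((hW i j).2.1 b).2, ih]
  have hLr := fun j => (hL j).2.2.2
  have hWr := fun i j => (hW i j).2.2
  simp only [hq _ _ _, ha _ _ _] at hLr hWr
  have hinit : ∀ t j b, (∀ i, (c i j).inK = decide (i < t)) →
      (∀ i, MInit (M b) (colLetter (c0 b) (c1 b) (bl b) (c i j).st) (c i j).inK ((c i j).mc b)) →
      (⟨((c 0 j).mc b).q, fun i => ((c i j).mc b).l, fun i => ((c i j).mc b).r⟩ :
        FConf (M b).Q (M b).Γ) = initc (M b) (ℓ b) t := by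
    intro t j b hK hI
    rw [initc]
    congr 1
    · exact (hI 0).1
    · funext i; exact (hI i).2.1
    · funext i; rw [(hI i).2.2, hℓ, hK]; simp
  have hdec : ∀ t t' : ℕ, (∀ i, decide (i < t) = decide (i < t')) → t = t' := by
    intro t t' h
    have a := h t
    have b := h t'
    simp at a b
    omega
  have hdich : ∀ j, ((M false).δ ((c 0 j).mc false).q ((c 0 j).mc false).r = none ∧
      (∀ t, (∀ i, (c i j).inK = decide (i < t)) →
        ∀ i, (c i (j + 1)).inK = decide (i < t + 1)) ∧
      ∀ i b, MInit (M b) (colLetter (c0 b) (c1 b) (bl b) (c i (j + 1)).st) (c i (j + 1)).inK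
        ((c i (j + 1)).mc b)) ∨
      ((∀ i, (c i (j + 1)).inK = (c i j).inK) ∧
        ∀ b, ∃ s, (M b).δ ((c 0 j).mc b).q ((c 0 j).mc b).r = some s ∧
          MStepL (M b) s ((c 0 j).mc b) ((c 0 (j + 1)).mc b) ∧
          ∀ i, MStep (M b) s ((c i j).mc b) ((c (i + 1) j).mc b) ((c i (j + 1)).mc b)
            ((c (i + 1) (j + 1)).mc b)) := by
    intro j
    by_cases hn : (M false).δ ((c 0 j).mc false).q ((c 0 j).mc false).r = none
    · left
      have h1 : ∀ i, (c (i + 1) (j + 1)).inK = (c i j).inK ∧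
          ∀ b, MInit (M b) (colLetter (c0 b) (c1 b) (bl b) (c i (j + 1)).st) (c i (j + 1)).inK
            ((c i (j + 1)).mc b) := by
        intro i
        rcases (hWr i j).2 with h | ⟨h, _⟩
        · exact h.2
        · obtain ⟨s, hs, _⟩ := h false
          rw [hn] at hs; cases hs
      refine ⟨hn, fun t ht i => ?_, fun i => (h1 i).2⟩
      rcases i with _ | i
      · rcases hLr j with h | h
        · simp [h.2]
        · obtain ⟨s, hs, _⟩ := h false
          rw [hn] at hs; cases hs
      · rw [(h1 i).1, ht i]; simp
    · right
      have h1 : ∀ i, _ := fun i => (hWr i j).2.resolve_left fun h => hn h.1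
      have h2 := (hLr j).resolve_left fun h => hn h.1
      refine ⟨fun i => (h1 i).2, fun b => ?_⟩
      obtain ⟨s, hs, hs'⟩ := h2 b
      refine ⟨s, hs, hs', fun i => ?_⟩
      obtain ⟨s', hs1, hs2⟩ := (h1 i).1 b
      rw [hs] at hs1
      cases hs1
      exact hs2
  have hex : ∀ j, ∃ t, ∀ i, (c i j).inK = decide (i < t) := by
    intro j
    induction j with
    | zero =>
      refine ⟨2, fun i => ?_⟩
      rw [(hB i).2.1]
      exact decide_eq_decide.2 (hpc i 0)
    | succ j ih =>
      obtain ⟨t, ht⟩ := ih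
      rcases hdich j with h | h
      · exact ⟨t + 1, h.2.1 t ht⟩
      · exact ⟨t, fun i => by rw [h.1 i, ht i]⟩
  choose t ht using hex
  have ht0 : t 0 = 2 := hdec _ _ fun i => by
    rw [← ht 0 i, (hB i).2.1]
    exact decide_eq_decide.2 (hpc i 0)
  refine ⟨fun j => ⟨t j, fun b => ⟨((c 0 j).mc b).q, fun i => ((c i j).mc b).l,
    fun i => ((c i j).mc b).r⟩⟩, ht0, fun b => ?_, fun j => ⟨?_, ?_⟩⟩
  · refine hinit 2 0 b (fun i => by rw [← ht0]; exact ht 0 i) fun i => (hB i).2.2 b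
  · have := (hWr 0 j).1
    simpa [FM.step] using this
  · rcases hdich j with ⟨h1, h2, h3⟩ | ⟨h1, h2⟩
    · left
      have h4 : t (j + 1) = t j + 1 := hdec _ _ fun i => by rw [← ht (j + 1), h2 _ (ht j)]
      refine ⟨by simpa [FM.step] using h1, h4, fun b => ?_⟩
      exact hinit (t j + 1) (j + 1) b (h2 _ (ht j)) fun i => h3 i b
    · right
      refine ⟨fun b => ?_, hdec _ _ fun i => by rw [← ht (j + 1), h1, ht j]⟩
      obtain ⟨s, hs, hs1, hs2⟩ := h2 b
      refine FM.step_eq _ hs ?_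
      obtain ⟨q, s⟩ := s
      cases s with
      | move d =>
        cases d with
        | left =>
          ext i
          · exact (hs2 0).1
          · exact (hs2 i).2.1
          · rcases i with _ | i
            · exact hs1
            · exact (hs2 i).2.2
        | right =>
          ext i
          · exact (hs2 0).1
          · rcases i with _ | i
            · exact hs1
            · exact (hs2 i).2.2
          · exact (hs2 i).2.1
      | write a =>
        ext i
        · exact (hs2 0).1
        · exact (hs2 i).2.1
        · rcases i with _ | i
          · exact hs1
          · exact (hs2 i).2.2

theorem grid_complete (z : ℕ → D) (y : ℕ → (Fin m → Bool)) (hz : ∀ n, π (z n) = y (n / m))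
    (ρ : ℕ → RowSt M) (hρ0 : (ρ 0).t = 2)
    (hρ1 : ∀ b, (ρ 0).conf b = initc (M b) (tapeLetter (c0 b) (c1 b) (bl b) (flat y)) 2)
    (hρ : ∀ j, Next M (fun b => tapeLetter (c0 b) (c1 b) (bl b) (flat y)) (ρ j) (ρ (j + 1))) :
    ∃ c : ℕ → ℕ → Cell D m M,
      ValidGrid (BotRule M c0 c1 bl π) (LeftRule M) (WinRule M c0 c1 bl) c ∧
      ∀ i j, (c i j).v = z (i + j) := by
  have hm := NeZero.pos m
  let σ : ℕ → ColSt m := fun i => ⟨y (i / m), Fin.ofNat m i,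
    if i = 0 then 0 else if i = 1 then 1 else 2, flat y (i - 1), flat y (i - 2)⟩
  have hσ : ∀ b i, colLetter (c0 b) (c1 b) (bl b) (σ i) =
      tapeLetter (c0 b) (c1 b) (bl b) (flat y) i := by
    intro b i
    unfold colLetter
    rcases i with _ | _ | i <;> simp [σ, tapeLetter]
  let c : ℕ → ℕ → Cell D m M := fun i j => ⟨z (i + j), σ i, decide (i < (ρ j).t),
    fun b => ⟨((ρ j).conf b).q, ((ρ j).conf b).R 0, ((ρ j).conf b).L i, ((ρ j).conf b).R i⟩⟩
  have hinit : ∀ i j b t, (ρ j).conf b = initc (M b) (tapeLetter (c0 b) (c1 b) (bl b) (flat y)) t →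
      (ρ j).t = t → MInit (M b) (colLetter (c0 b) (c1 b) (bl b) (c i j).st) (c i j).inK
        ((c i j).mc b) := by
    intro i j b t h1 h2
    refine ⟨by simp [c, h1, initc], by simp [c, h1, initc], ?_⟩
    simp only [c, hσ, h1, initc, h2]
    simp
  have hex : ∀ j b, (M b).step ((ρ j).conf b) = some ((ρ (j + 1)).conf b) →
      ∃ s, (M b).δ ((ρ j).conf b).q (((ρ j).conf b).R 0) = some s ∧
        (ρ (j + 1)).conf b = ((ρ j).conf b).app s := by
    intro j b h
    simp only [FM.step, Option.map_eq_some_iff] at h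
    obtain ⟨s, h1, h2⟩ := h
    exact ⟨s, h1, h2.symm⟩
  refine ⟨c, ⟨fun i => ⟨(hz i).symm, ?_, fun b => hinit i 0 b 2 (hρ1 b) hρ0⟩,
    fun j => ⟨?_, rfl, fun b => rfl, ?_⟩, fun i j => ⟨⟨?_, rfl, ?_, ?_, ?_, rfl, ?_⟩,
      fun b => ⟨rfl, rfl⟩, ?_, ?_⟩⟩, fun i j => rfl⟩
  · simp only [c, hρ0, σ]
    rcases i with _ | _ | i <;> simp
  · ext; simp [c, σ]
  · rcases (hρ j).2 with ⟨h1, h2, h3⟩ | ⟨h1, h2⟩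
    · left
      refine ⟨by simpa [FM.step] using h1, ?_⟩
      simp [c, h2]
    · right
      intro b
      obtain ⟨⟨q, s⟩, hs1, hs2⟩ := hex j b (h1 b)
      refine ⟨_, hs1, ?_⟩
      simp only [c, hs2, MStepL]
      cases s with
      | move d => cases d <;> rfl
      | write a => rfl
  · simp only [c]; congr 1; omega
  · ext; simp [c, σ, Fin.val_add]
  · intro h
    simp only [c, σ] at h ⊢
    congr 1
    have h1 : (i + 1) % m ≠ 0 := by
      intro h0
      apply h
      ext; simp [Fin.val_add, h0]
    rw [Nat.succ_div, if_neg (fun hd => h1 (Nat.mod_eq_zero_of_dvd hd)), add_zero]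
  · simp only [c, σ]
    rcases i with _ | _ | i <;> simp
  · simp only [c, σ]
    rfl
  · have := (hρ j).1
    simpa [FM.step] using this
  · rcases (hρ j).2 with ⟨h1, h2, h3⟩ | ⟨h1, h2⟩
    · left
      refine ⟨by simpa [FM.step] using h1, by simp [c, h2], fun b => ?_⟩
      exact hinit i (j + 1) b ((ρ j).t + 1) (h3 b) h2
    · right
      refine ⟨fun b => ?_, by simp [c, h2]⟩
      obtain ⟨⟨q, s⟩, hs1, hs2⟩ := hex j b (h1 b)
      refine ⟨_, hs1, ?_⟩
      simp only [c, hs2, MStep]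
      cases s with
      | move d => cases d <;> exact ⟨rfl, rfl, rfl⟩
      | write a => exact ⟨rfl, rfl, rfl⟩

end

/-- The tiling lemma. -/
theorem exists_grid {D : Type} [Finite D] {m : ℕ} [NeZero m] (Y : Set (ℕ → (Fin m → Bool)))
    (hY : EffectivelyClosedSet Y) (π : D → (Fin m → Bool)) :
    ∃ (C : Type) (_ : Finite C) (v : C → D) (Bot : C → Prop) (Lf : C → C → Prop)
      (R : C → C → C → C → Prop),
      (∀ c : ℕ → ℕ → C, ValidGrid Bot Lf R c → ∃ z : ℕ → D, (∀ i j, v (c i j) = z (i + j)) ∧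
        ∃ y ∈ Y, ∀ n, π (z n) = y (n / m)) ∧
      (∀ z : ℕ → D, (∃ y ∈ Y, ∀ n, π (z n) = y (n / m)) →
        ∃ c : ℕ → ℕ → C, ValidGrid Bot Lf R c ∧ ∀ i j, v (c i j) = z (i + j)) := by
  obtain ⟨P, hP, hPY⟩ := exists_test Y hY
  obtain ⟨F1, a1, b1, l1, h1⟩ := exists_fm P hP.to_re
  obtain ⟨F0, a0, b0, l0, h0⟩ := exists_fm (fun n => ¬ P n) hP.not.to_re
  let M : Bool → FM := fun b => match b with | true => F1 | false => F0
  let c0 : ∀ b, (M b).Γ := fun b => match b with | true => a1 | false => a0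
  let c1 : ∀ b, (M b).Γ := fun b => match b with | true => b1 | false => b0
  let bl : ∀ b, Bool → (M b).Γ := fun b => match b with | true => l1 | false => l0
  have H1 : ∀ (f : ℕ → Bool) k, (∃ n, It (M true).step
      (initc (M true) (tapeLetter (c0 true) (c1 true) (bl true) f) (k + 2)) n = none) ↔
        P (binNum (pre f k)) := by
    intro f k
    rw [initc_eq]
    exact h1 (pre f k)
  have H0 : ∀ (f : ℕ → Bool) k, (∃ n, It (M false).step
      (initc (M false) (tapeLetter (c0 false) (c1 false) (bl false) f) (k + 2)) n = none) ↔
        ¬ P (binNum (pre f k)) := by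
    intro f k
    rw [initc_eq]
    exact h0 (pre f k)
  refine ⟨Cell D m M, inferInstance, Cell.v, BotRule M c0 c1 bl π, LeftRule M,
    WinRule M c0 c1 bl, fun c hc => ?_, fun z hz => ?_⟩
  · obtain ⟨z, hz, y, hy, hpc, hl⟩ := grid_sound_static M c0 c1 bl π c hc
    refine ⟨z, hz, y, ?_, hy⟩
    rw [hPY]
    obtain ⟨ρ, r1, r2, r3⟩ := grid_sound_dyn M c0 c1 bl π c hc
      (fun b => tapeLetter (c0 b) (c1 b) (bl b) (flat y)) hpc hl
    exact dyn_sound M _ (fun k => P (binNum (pre (flat y) k))) (H1 (flat y)) (H0 (flat y)) ρ r1 r2 r3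
  · obtain ⟨y, hy, hzy⟩ := hz
    rw [hPY] at hy
    obtain ⟨ρ, r1, r2, r3⟩ := dyn_complete M (fun b => tapeLetter (c0 b) (c1 b) (bl b) (flat y))
      (fun k => by rw [H1]; exact hy k)
    exact grid_complete M c0 c1 bl π z y hzy ρ r1 r2 r3

end SelfSim

namespace SelfSim

/-- A local function of configurations and positions. -/
def Loc {G 𝔸 β : Type} [Group G] (f : (G → 𝔸) → G → β) : Prop :=
  ∃ F : Finset G, ∀ x x' g g', (∀ h ∈ F, x (g * h) = x' (g' * h)) → f x g = f x' g'

namespace Loc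
variable {G 𝔸 : Type} [Group G]

theorem val {β : Type} (u : 𝔸 → β) : Loc (fun (x : G → 𝔸) (g : G) => u (x g)) := by
  refine ⟨{1}, fun x x' g g' h => ?_⟩
  have := h 1 (by simp)
  simp only [mul_one] at this
  simp only [this]

theorem map {β γ : Type} {f : (G → 𝔸) → G → β} (hf : Loc f) (u : β → γ) :
    Loc (fun (x : G → 𝔸) (g : G) => u (f x g)) := by
  obtain ⟨F, hF⟩ := hf
  exact ⟨F, fun x x' g g' h => by simp only [hF x x' g g' h]⟩

theorem map2 {β γ δ : Type} {f : (G → 𝔸) → G → β} {k : (G → 𝔸) → G → γ} (hf : Loc f) (hk : Loc k)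
    (u : β → γ → δ) : Loc (fun (x : G → 𝔸) (g : G) => u (f x g) (k x g)) := by
  classical
  obtain ⟨F, hF⟩ := hf
  obtain ⟨F', hF'⟩ := hk
  refine ⟨F ∪ F', fun x x' g g' h => ?_⟩
  have h1 := hF x x' g g' fun y hy => h y (Finset.mem_union_left _ hy)
  have h2 := hF' x x' g g' fun y hy => h y (Finset.mem_union_right _ hy)
  simp only [h1, h2]

theorem all {ι : Type} [Finite ι] {f : ι → (G → 𝔸) → G → Prop} (hf : ∀ i, Loc (f i)) :
    Loc (fun (x : G → 𝔸) (g : G) => ∀ i, f i x g) := by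
  classical
  have := Fintype.ofFinite ι
  choose F hF using hf
  refine ⟨Finset.univ.biUnion F, fun x x' g g' h => ?_⟩
  have : ∀ i, f i x g = f i x' g' := fun i => hF i x x' g g' fun y hy =>
    h y (Finset.mem_biUnion.2 ⟨i, Finset.mem_univ _, hy⟩)
  simp only [this]

theorem imp (p : Prop) {f : (G → 𝔸) → G → Prop} (hf : p → Loc f) :
    Loc (fun (x : G → 𝔸) (g : G) => p → f x g) := by
  by_cases hp : p
  · exact (hf hp).map fun q => p → q
  · exact ⟨∅, fun x x' g g' h => by simp [hp]⟩

theorem finite_range [Finite 𝔸] {f : (G → 𝔸) → G → G} (hf : Loc f) :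
    ∃ S : Finset G, ∀ x g, f x g ∈ S := by
  obtain ⟨F, hF⟩ := hf
  have hfin : (Set.range fun q : (G → 𝔸) × G => f q.1 q.2).Finite := by
    have h1 : (Set.range fun q : (G → 𝔸) × G => (fun h : F => q.1 (q.2 * h))).Finite :=
      Set.toFinite _
    have h2 : Function.FactorsThrough (fun q : (G → 𝔸) × G => f q.1 q.2)
        (fun q : (G → 𝔸) × G => (fun h : F => q.1 (q.2 * h))) := by
      intro q q' h
      exact hF _ _ _ _ fun y hy => congrFun h ⟨y, hy⟩
    have h3 := h1.image (Function.extend (fun q : (G → 𝔸) × G => (fun h : F => q.1 (q.2 * h)))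
      (fun q : (G → 𝔸) × G => f q.1 q.2) (fun _ => 1))
    refine h3.subset ?_
    rintro _ ⟨q, rfl⟩
    exact ⟨_, ⟨q, rfl⟩, h2.extend_apply _ q⟩
  exact ⟨hfin.toFinset, fun x g => by rw [Set.Finite.mem_toFinset]; exact ⟨(x, g), rfl⟩⟩

theorem moved [Finite 𝔸] {β : Type} {f : (G → 𝔸) → G → β} (hf : Loc f)
    {d : (G → 𝔸) → G → G} (hd : Loc d) :
    Loc (fun (x : G → 𝔸) (g : G) => f x (g * d x g)) := by
  classical
  obtain ⟨S, hS⟩ := hd.finite_range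
  obtain ⟨F, hF⟩ := hf
  obtain ⟨F', hF'⟩ := hd
  refine ⟨F' ∪ S * F, fun x x' g g' h => ?_⟩
  have h1 := hF' x x' g g' fun y hy => h y (Finset.mem_union_left _ hy)
  show f x (g * d x g) = f x' (g' * d x' g')
  rw [h1]
  refine hF _ _ _ _ fun y hy => ?_
  rw [mul_assoc, mul_assoc]
  exact h _ (Finset.mem_union_right _ (Finset.mul_mem_mul (hS _ _) hy))

theorem isSFT {f : (G → 𝔸) → G → Prop} (hf : Loc f) : IsSFT {x : G → 𝔸 | ∀ g, f x g} := by
  obtain ⟨F, hF⟩ := hf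
  refine ⟨F, {pat | ∃ x g, (∀ h : F, pat h = x (g * h)) ∧ f x g}, fun x => ⟨fun h g => ?_,
    fun h g => ?_⟩⟩
  · exact ⟨x, g, fun _ => rfl, h g⟩
  · obtain ⟨x', g', h1, h2⟩ := h g
    rw [hF x x' g g' fun y hy => h1 ⟨y, hy⟩]
    exact h2

theorem continuous [TopologicalSpace 𝔸] [DiscreteTopology 𝔸] {β : Type} [TopologicalSpace β]
    {f : (G → 𝔸) → G → β} (hf : Loc f) (g : G) : Continuous (fun x => f x g) := by
  obtain ⟨F, hF⟩ := hf
  apply IsLocallyConstant.continuous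
  rw [IsLocallyConstant.iff_exists_open]
  intro x
  refine ⟨⋂ h ∈ F, {x' | x' (g * h) = x (g * h)}, ?_, ?_, ?_⟩
  · refine isOpen_biInter_finset fun h _ => ?_
    have hc : Continuous fun x' : G → 𝔸 => x' (g * h) := continuous_apply (g * h)
    have ho : IsOpen ({x (g * h)} : Set 𝔸) := isOpen_discrete _
    exact ho.preimage hc
  · simp
  · intro x' hx'
    refine hF _ _ _ _ fun h hh => ?_
    simp only [Set.mem_iInter] at hx'
    exact hx' h hh

end Loc

/-- The combinatorial frame in a group on which the simulation is built. -/
structure Frame (G : Type) [Group G] where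
  P : Type
  T : Type
  finP : Finite P
  finT : Finite T
  p0 : P
  Dj : P → P → Prop
  symm : ∀ p q, Dj p q → Dj q p
  mv : P → Bool → Bool → G
  eps : P → G → Bool
  tm : T → G
  pt : T → P
  comm : ∀ p q, Dj p q → ∀ k s k' s', Commute (mv p k s) (mv q k' s')
  eps_mv : ∀ p q, Dj p q → ∀ g k s, eps p (g * mv q k s) = eps p g
  commT : ∀ t k s, Commute (mv (pt t) k s) (tm t)
  epsT : ∀ t g, eps (pt t) (g * tm t) = eps (pt t) g
  inj : ∀ p k k' g g', g * mv p k (eps p g) = g' * mv p k' (eps p g') → k = k' ∧ g = g'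
  gen : ∀ g, ∃ w : List T, (w.map tm).prod = g
  conn : ∀ p q, Relation.ReflTransGen Dj p q
  nbr : ∀ p, ∃ q, Dj p q

namespace Frame
variable {G : Type} [Group G] (fr : Frame G)

/-- The move of kind `k` along `p` with signs `e`. -/
def mvf (e : fr.P → G → Bool) (p : fr.P) (k : Bool) (g : G) : G := g * fr.mv p k (e p g)

/-- The position of the `i`-th tape cell of the tape of `g`. -/
def pos (e : fr.P → G → Bool) (p : fr.P) (i : ℕ) (g : G) : G :=
  (fr.mvf e p false)^[i] (fr.mvf e p true g)

/-- Sign functions invariant under commuting moves. -/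
def Inv (e : fr.P → G → Bool) : Prop :=
  ∀ p q, fr.Dj p q → ∀ g k s, e p (g * fr.mv q k s) = e p g

variable {fr}

theorem pos_succ (e : fr.P → G → Bool) (p : fr.P) (i : ℕ) (g : G) :
    fr.pos e p (i + 1) g = fr.mvf e p false (fr.pos e p i g) := by
  simp only [pos, Function.iterate_succ_apply']

theorem mvf_comm {e : fr.P → G → Bool} (he : fr.Inv e) {p q : fr.P} (h : fr.Dj p q) (k k' : Bool)
    (g : G) : fr.mvf e p k (fr.mvf e q k' g) = fr.mvf e q k' (fr.mvf e p k g) := by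
  simp only [mvf]
  rw [he p q h, he q p (fr.symm _ _ h), mul_assoc, mul_assoc, (fr.comm p q h k _ k' _).eq]

theorem pos_mvf {e : fr.P → G → Bool} (he : fr.Inv e) {p q : fr.P} (h : fr.Dj p q) (k : Bool)
    (i : ℕ) (g : G) : fr.pos e p i (fr.mvf e q k g) = fr.mvf e q k (fr.pos e p i g) := by
  induction i with
  | zero => exact mvf_comm he h _ _ _
  | succ i ih => rw [pos_succ, pos_succ, ih, mvf_comm he h]

theorem pos_pos {e : fr.P → G → Bool} (he : fr.Inv e) {p q : fr.P} (h : fr.Dj p q)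
    (i j : ℕ) (g : G) : fr.pos e p i (fr.pos e q j g) = fr.pos e q j (fr.pos e p i g) := by
  induction j with
  | zero => exact pos_mvf he h _ _ _
  | succ j ih => rw [pos_succ, pos_succ, pos_mvf he h, ih]

theorem pos_tm {e : fr.P → G → Bool} (he : ∀ t g, e (fr.pt t) (g * fr.tm t) = e (fr.pt t) g)
    (t : fr.T) (i : ℕ) (g : G) :
    fr.pos e (fr.pt t) i (g * fr.tm t) = fr.pos e (fr.pt t) i g * fr.tm t := by
  have h1 : ∀ k g, fr.mvf e (fr.pt t) k (g * fr.tm t) = fr.mvf e (fr.pt t) k g * fr.tm t := by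
    intro k g
    simp only [mvf]
    rw [he, mul_assoc, mul_assoc, (fr.commT t k _).eq]
  induction i with
  | zero => exact h1 _ _
  | succ i ih => rw [pos_succ, pos_succ, ih, h1]

theorem inv_eps : fr.Inv fr.eps := fr.eps_mv

theorem pos_inj {p : fr.P} {i i' : ℕ} {g g' : G} (h : fr.pos fr.eps p i g = fr.pos fr.eps p i' g') :
    i = i' ∧ g = g' := by
  induction i generalizing i' with
  | zero =>
    rcases i' with _ | i'
    · exact ⟨rfl, (fr.inj _ _ _ _ _ h).2⟩
    · rw [pos_succ] at h
      exact absurd (fr.inj _ _ _ _ _ h).1 (by simp)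
  | succ i ih =>
    rw [pos_succ] at h
    rcases i' with _ | i'
    · exact absurd (fr.inj _ _ _ _ _ h).1 (by simp)
    · rw [pos_succ] at h
      have := ih (fr.inj _ _ _ _ _ h).2
      exact ⟨by rw [this.1], this.2⟩

variable (fr) in
open Classical in
/-- Decoding of a position. -/
noncomputable def dec (p : fr.P) (h : G) : Option (ℕ × G) :=
  if H : ∃ q : ℕ × G, fr.pos fr.eps p q.1 q.2 = h then some H.choose else none

theorem dec_pos (p : fr.P) (i : ℕ) (g : G) : fr.dec p (fr.pos fr.eps p i g) = some (i, g) := by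
  have H : ∃ q : ℕ × G, fr.pos fr.eps p q.1 q.2 = fr.pos fr.eps p i g := ⟨(i, g), rfl⟩
  rw [dec, dif_pos H]
  have := pos_inj H.choose_spec
  rw [Option.some_inj]
  exact Prod.ext this.1 this.2

theorem dec_eq {p : fr.P} {h : G} {i : ℕ} {g : G} (H : fr.dec p h = some (i, g)) :
    h = fr.pos fr.eps p i g := by
  rw [dec] at H
  split at H
  · next H' =>
    have := H'.choose_spec
    rw [Option.some_inj] at H
    rw [H] at this
    exact this.symm
  · cases H

theorem dec_tm (t : fr.T) (h : G) : fr.dec (fr.pt t) (h * fr.tm t) =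
    (fr.dec (fr.pt t) h).map fun q => (q.1, q.2 * fr.tm t) := by
  rcases H : fr.dec (fr.pt t) h with _ | ⟨i, g⟩
  · rcases H' : fr.dec (fr.pt t) (h * fr.tm t) with _ | ⟨i, g⟩
    · rfl
    · have h1 := dec_eq H'
      have h2 : h = fr.pos fr.eps (fr.pt t) i (g * (fr.tm t)⁻¹) := by
        have := pos_tm (e := fr.eps) fr.epsT t i (g * (fr.tm t)⁻¹)
        rw [inv_mul_cancel_right, ← h1] at this
        exact mul_right_cancel this
      rw [h2, dec_pos] at H
      cases H
  · rw [dec_eq H, ← pos_tm fr.epsT, dec_pos]; rfl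

end Frame

end SelfSim

namespace SelfSim

/-- Words of bounded length. -/
abbrev BW (T : Type) (L : ℕ) : Type := {l : List T // l.length ≤ L}

instance finite_bw (T : Type) [Finite T] (L : ℕ) : Finite (BW T L) :=
  (List.finite_length_le T L).to_subtype

/-- The empty word. -/
def nilW (T : Type) (L : ℕ) : BW T L := ⟨[], Nat.zero_le _⟩

/-- Window rule with partially defined cells. -/
def K2 {C : Type} (R : C → C → C → C → Prop) (o o1 o2 o3 : Option C) : Prop :=
  ∀ c, o = some c → ∃ c1 c2 c3, o1 = some c1 ∧ o2 = some c2 ∧ o3 = some c3 ∧ R c c1 c2 c3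

/-- Bottom rule with partially defined cells. -/
def K3 {C D : Type} (v : C → D) (Bot : C → Prop) (o : Option C) (d : D) : Prop :=
  ∀ c, o = some c → Bot c ∧ v c = d

/-- Left rule with partially defined cells. -/
def K4 {C D : Type} (v : C → D) (Lf : C → C → Prop) (o o' : Option C) (d : D) : Prop :=
  ∀ c, o = some c → v c = d ∧ (∃ c₂, o' = some c₂ ∧ Lf c c₂)

/-- Comparison of tapes. -/
def K5 {T : Type} {L : ℕ} (t : T) (d d' : BW T L → Bool) : Prop :=
  ∀ (w : List T) (hw : w.length + 1 ≤ L), d ⟨t :: w, hw⟩ = d' ⟨w, by omega⟩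

namespace Frame
variable {G : Type} [Group G] (fr : Frame G) {L : ℕ} {C : Type}

/-- The local rules of the simulating subshift. -/
def RuleAt (v : C → BW fr.T L → Bool) (Bot : C → Prop) (Lf : C → C → Prop)
    (R : C → C → C → C → Prop) (e : fr.P → G → Bool) (τ : fr.P → G → BW fr.T L → Bool)
    (κ : fr.P → fr.P → G → Option C) (g : G) : Prop :=
  (∀ p q k s, fr.Dj p q → e p (g * fr.mv q k s) = e p g) ∧
  (∀ t, e (fr.pt t) (g * fr.tm t) = e (fr.pt t) g) ∧
  (∀ p q, fr.Dj p q → κ p q (fr.mvf e p true (fr.mvf e q true g)) ≠ none) ∧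
  (∀ p q, fr.Dj p q → K2 R (κ p q g) (κ p q (fr.mvf e p false g)) (κ p q (fr.mvf e q false g))
    (κ p q (fr.mvf e p false (fr.mvf e q false g)))) ∧
  (∀ p q, fr.Dj p q → K3 v Bot (κ p q (fr.mvf e q true g)) (τ p g)) ∧
  (∀ p q, fr.Dj p q → K4 v Lf (κ p q (fr.mvf e p true g))
    (κ p q (fr.mvf e q false (fr.mvf e p true g))) (τ q g)) ∧
  (∀ t, K5 t (τ (fr.pt t) g) (τ (fr.pt t) (g * fr.tm t)))

variable {fr} {m : ℕ} [NeZero m]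

theorem sound_tape {v : C → BW fr.T L → Bool} {Bot : C → Prop} {Lf : C → C → Prop}
    {R : C → C → C → C → Prop} {Y : Set (ℕ → (Fin m → Bool))}
    {π : (BW fr.T L → Bool) → (Fin m → Bool)}
    (hC : ∀ c : ℕ → ℕ → C, ValidGrid Bot Lf R c → ∃ z : ℕ → BW fr.T L → Bool,
      (∀ i j, v (c i j) = z (i + j)) ∧ ∃ y ∈ Y, ∀ n, π (z n) = y (n / m))
    {e : fr.P → G → Bool} {τ : fr.P → G → BW fr.T L → Bool} {κ : fr.P → fr.P → G → Option C}
    (hr : ∀ g, fr.RuleAt v Bot Lf R e τ κ g) {p q : fr.P} (hpq : fr.Dj p q) (g : G) :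
    (∀ n, τ p (fr.pos e p n g) = τ q (fr.pos e q n g)) ∧
      ∃ y ∈ Y, ∀ n, π (τ p (fr.pos e p n g)) = y (n / m) := by
  have he : fr.Inv e := fun p q h g k s => (hr g).1 p q k s h
  have h2 := fun g => (hr g).2.2.2.1 p q hpq
  have hsome : ∀ i j, ∃ c, κ p q (fr.pos e p i (fr.pos e q j g)) = some c := by
    intro i
    induction i with
    | zero =>
      intro j
      induction j with
      | zero => exact Option.ne_none_iff_exists'.1 ((hr g).2.2.1 p q hpq)
      | succ j ih =>
        obtain ⟨c, hc⟩ := ih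
        obtain ⟨c1, c2, c3, _, h, _⟩ := h2 _ c hc
        exact ⟨c2, by rw [pos_succ, pos_mvf he hpq]; exact h⟩
    | succ i ih =>
      intro j
      obtain ⟨c, hc⟩ := ih j
      obtain ⟨c1, c2, c3, h, _, _⟩ := h2 _ c hc
      exact ⟨c1, by rw [pos_succ]; exact h⟩
  choose c hc using hsome
  have hval : ValidGrid Bot Lf R c := by
    refine ⟨fun i => ?_, fun j => ?_, fun i j => ?_⟩
    · have := (hr (fr.pos e p i g)).2.2.2.2.1 p q hpq (c i 0)
        (by rw [← pos_mvf he hpq]; exact hc i 0)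
      exact this.1
    · obtain ⟨_, c', h1, h2⟩ := (hr (fr.pos e q j g)).2.2.2.2.2.1 p q hpq (c 0 j) (hc 0 j)
      have h3 := hc 0 (j + 1)
      rw [pos_succ, pos_mvf he hpq] at h3
      have h4 : c 0 (j + 1) = c' := Option.some_inj.1 (h3.symm.trans h1)
      rw [h4]; exact h2
    · obtain ⟨c1, c2, c3, e1, e2, e3, h⟩ := h2 _ _ (hc i j)
      have h3 := hc (i + 1) j
      rw [pos_succ] at h3
      have h4 := hc i (j + 1)
      rw [pos_succ, pos_mvf he hpq] at h4
      have h5 := hc (i + 1) (j + 1)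
      rw [pos_succ, pos_succ, pos_mvf he hpq] at h5
      rw [Option.some_inj.1 (h3.symm.trans e1), Option.some_inj.1 (h4.symm.trans e2),
        Option.some_inj.1 (h5.symm.trans e3)]
      exact h
  obtain ⟨z, hz, y, hy, hzy⟩ := hC c hval
  have hp : ∀ n, τ p (fr.pos e p n g) = z n := by
    intro n
    have := (hr (fr.pos e p n g)).2.2.2.2.1 p q hpq (c n 0)
        (by rw [← pos_mvf he hpq]; exact hc n 0)
    rw [← this.2, hz]; rfl
  have hq : ∀ n, τ q (fr.pos e q n g) = z n := by
    intro n
    have := (hr (fr.pos e q n g)).2.2.2.2.2.1 p q hpq (c 0 n) (hc 0 n)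
    rw [← this.1, hz, zero_add]
  exact ⟨fun n => by rw [hp, hq], y, hy, fun n => by rw [hp]; exact hzy n⟩

theorem sound {v : C → BW fr.T L → Bool} {Bot : C → Prop} {Lf : C → C → Prop}
    {R : C → C → C → C → Prop} {X : Set (ℕ → Bool)} {act : G → (ℕ → Bool) → ℕ → Bool}
    {s : Fin m → G} (wd : Fin m → BW fr.T L) (hwd : ∀ i, ((wd i).1.map fr.tm).prod = (s i)⁻¹)
    (hact : IsActionOn act X) (hs1 : ∃ i, s i = 1) (hgen : Submonoid.closure (Set.range s) = ⊤)
    (hC : ∀ c : ℕ → ℕ → C, ValidGrid Bot Lf R c → ∃ z : ℕ → BW fr.T L → Bool,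
      (∀ i j, v (c i j) = z (i + j)) ∧
      ∃ y ∈ SetRep s act X, ∀ n, (fun i => z n (wd i)) = y (n / m))
    {e : fr.P → G → Bool} {τ : fr.P → G → BW fr.T L → Bool} {κ : fr.P → fr.P → G → Option C}
    (hr : ∀ g, fr.RuleAt v Bot Lf R e τ κ g) (p : fr.P) :
    (∀ g, (fun n => τ p (fr.pos e p (m * n) g) (nilW fr.T L)) ∈ X) ∧
    ∀ k g, (fun n => τ p (fr.pos e p (m * n) (g * k⁻¹)) (nilW fr.T L)) =
      act k (fun n => τ p (fr.pos e p (m * n) g) (nilW fr.T L)) := by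
  have hm := NeZero.pos m
  have hST := fun {p q} (h : fr.Dj p q) (g : G) =>
    sound_tape (π := fun d i => d (wd i)) hC hr h g
  have heq : ∀ q g n, τ q (fr.pos e q n g) = τ p (fr.pos e p n g) := by
    intro q g n
    induction fr.conn p q with
    | refl => rfl
    | tail _ h ih => rw [← ih, (hST h g).1 n]
  have hcons : ∀ (w : List fr.T) (hw : w.length ≤ L) g n,
      τ p (fr.pos e p n g) ⟨w, hw⟩ =
        τ p (fr.pos e p n (g * (w.map fr.tm).prod)) (nilW fr.T L) := by
    intro w
    induction w with
    | nil => intro _ g n; simp [nilW]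
    | cons t w ih =>
      intro hw g n
      have h5 := (hr (fr.pos e (fr.pt t) n g)).2.2.2.2.2.2 t w hw
      rw [heq] at h5
      rw [h5, ← pos_tm (fun t g => (hr g).2.1 t), heq, ih, List.map_cons, List.prod_cons, mul_assoc]
  set x : G → ℕ → Bool := fun g n => τ p (fr.pos e p (m * n) g) (nilW fr.T L) with hx
  have hrep : ∀ g, x g ∈ X ∧ ∀ i, x (g * (s i)⁻¹) = act (s i) (x g) := by
    intro g
    obtain ⟨q, hq⟩ := fr.nbr p
    obtain ⟨y, ⟨x', hx', hy⟩, hn⟩ := (hST hq g).2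
    have h1 : ∀ i, x (g * (s i)⁻¹) = act (s i) x' := by
      intro i
      rw [← hy i]
      funext n
      have h2 := congrFun (hn (m * n)) i
      rw [Nat.mul_div_cancel_left _ hm] at h2
      rw [← h2, hcons, hwd]
    obtain ⟨i0, hi0⟩ := hs1
    have h3 : x g = x' := by
      have := h1 i0
      rw [hi0, inv_one, mul_one, hact.2.1 x' hx'] at this
      exact this
    rw [h3]
    exact ⟨hx', h1⟩
  refine ⟨fun g => (hrep g).1, fun k => ?_⟩
  have hk : k ∈ Submonoid.closure (Set.range s) := by rw [hgen]; trivial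
  show ∀ g, x (g * k⁻¹) = act k (x g)
  induction hk using Submonoid.closure_induction with
  | mem k hk =>
    obtain ⟨i, rfl⟩ := hk
    exact fun g => (hrep g).2 i
  | one => intro g; rw [inv_one, mul_one, hact.2.1 _ (hrep g).1]
  | mul a b _ _ ha hb =>
    intro g
    rw [mul_inv_rev, ← mul_assoc, ha, hb, hact.2.2 _ _ _ (hrep g).1]

theorem complete {v : C → BW fr.T L → Bool} {Bot : C → Prop} {Lf : C → C → Prop}
    {R : C → C → C → C → Prop} {X : Set (ℕ → Bool)} {act : G → (ℕ → Bool) → ℕ → Bool}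
    {s : Fin m → G} (wd : Fin m → BW fr.T L) (hwd : ∀ i, ((wd i).1.map fr.tm).prod = (s i)⁻¹)
    (hact : IsActionOn act X)
    (hC : ∀ z : ℕ → BW fr.T L → Bool,
      (∃ y ∈ SetRep s act X, ∀ n, (fun i => z n (wd i)) = y (n / m)) →
      ∃ c : ℕ → ℕ → C, ValidGrid Bot Lf R c ∧ ∀ i j, v (c i j) = z (i + j))
    {x : ℕ → Bool} (hx : x ∈ X) :
    ∃ (τ : fr.P → G → BW fr.T L → Bool) (κ : fr.P → fr.P → G → Option C),
      (∀ g, fr.RuleAt v Bot Lf R fr.eps τ κ g) ∧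
      ∀ p, (fun n => τ p (fr.pos fr.eps p (m * n) 1) (nilW fr.T L)) = x := by
  have hm := NeZero.pos m
  let z : G → ℕ → BW fr.T L → Bool := fun g n w => act (g * (w.1.map fr.tm).prod)⁻¹ x (n / m)
  have hz : ∀ g, ∃ c : ℕ → ℕ → C, ValidGrid Bot Lf R c ∧ ∀ i j, v (c i j) = z g (i + j) := by
    intro g
    refine hC (z g) ⟨fun n i => act (s i) (act g⁻¹ x) n, ⟨act g⁻¹ x, hact.1 _ hx, fun i => rfl⟩,
      fun n => ?_⟩
    funext i
    simp only [z, hwd]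
    rw [mul_inv_rev, inv_inv, hact.2.2 _ _ _ hx]
  choose c hc hv using hz
  let τ : fr.P → G → BW fr.T L → Bool := fun p h =>
    ((fr.dec p h).map fun a => z a.2 a.1).getD fun _ => false
  let κ : fr.P → fr.P → G → Option C := fun p q h =>
    (fr.dec p h).bind fun a => (fr.dec q a.2).map fun b => c b.2 a.1 b.1
  have hτ : ∀ p i g, τ p (fr.pos fr.eps p i g) = z g i := by
    intro p i g
    simp only [τ, dec_pos]; rfl
  have hκ : ∀ p q i j g, κ p q (fr.pos fr.eps p i (fr.pos fr.eps q j g)) = some (c g i j) := by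
    intro p q i j g
    simp only [κ, dec_pos, Option.bind_some, Option.map_some]
  have hκ' : ∀ p q h d, κ p q h = some d → ∃ i j g,
      h = fr.pos fr.eps p i (fr.pos fr.eps q j g) ∧ d = c g i j := by
    intro p q h d hd
    simp only [κ, Option.bind_eq_some_iff, Option.map_eq_some_iff] at hd
    obtain ⟨⟨i, h1⟩, hi, ⟨j, g⟩, hj, rfl⟩ := hd
    exact ⟨i, j, g, by rw [← dec_eq hj]; exact dec_eq hi, rfl⟩
  have he := inv_eps (fr := fr)
  refine ⟨τ, κ, fun g => ⟨fun p q k s h => he p q h g k s, fun t => fr.epsT t g,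
    fun p q h => ?_, fun p q h => ?_, fun p q h => ?_, fun p q h => ?_, fun t => ?_⟩, fun p => ?_⟩
  · have := hκ p q 0 0 g
    intro h0
    exact absurd (this.symm.trans h0) (by simp)
  · intro d hd
    obtain ⟨i, j, g', rfl, rfl⟩ := hκ' _ _ _ _ hd
    refine ⟨c g' (i + 1) j, c g' i (j + 1), c g' (i + 1) (j + 1), ?_, ?_, ?_, (hc g').2.2 i j⟩
    · rw [← hκ p q, pos_succ]
    · rw [← hκ p q, pos_succ, pos_mvf he h]
    · rw [← hκ p q, pos_succ, pos_succ, pos_mvf he h]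
  · intro d hd
    obtain ⟨i, j, g', h1, rfl⟩ := hκ' _ _ _ _ hd
    rw [pos_pos he h] at h1
    obtain ⟨rfl, rfl⟩ := pos_inj (i := 0) h1
    refine ⟨(hc g').1 i, ?_⟩
    rw [hτ, hv]; rfl
  · intro d hd
    obtain ⟨i, j, g', h1, rfl⟩ := hκ' _ _ _ _ hd
    obtain ⟨rfl, rfl⟩ := pos_inj (i := 0) h1
    refine ⟨by rw [hτ, hv, zero_add], c g' 0 (j + 1), ?_, (hc g').2.1 j⟩
    rw [← hκ p q, pos_succ, pos_mvf he h]; rfl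
  · intro w hw
    simp only [τ, dec_tm]
    rcases fr.dec (fr.pt t) g with _ | ⟨i, g'⟩
    · rfl
    · simp [z, mul_assoc]
  · funext n
    rw [hτ]
    simp [z, nilW, Nat.mul_div_cancel_left _ hm, hact.2.1 x hx]

theorem pos_shift {e e' : fr.P → G → Bool} (k : G) (h : ∀ p g, e' p g = e p (k⁻¹ * g)) (p : fr.P)
    (i : ℕ) (g : G) : k⁻¹ * fr.pos e' p i g = fr.pos e p i (k⁻¹ * g) := by
  have h1 : ∀ b g, k⁻¹ * fr.mvf e' p b g = fr.mvf e p b (k⁻¹ * g) := by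
    intro b g
    simp only [mvf, h, mul_assoc]
  induction i with
  | zero => exact h1 _ _
  | succ i ih => rw [pos_succ, pos_succ, h1, ih]

section locality
variable {𝔸 : Type} [Finite 𝔸] (E : 𝔸 → fr.P → Bool)

theorem loc_mvf {β : Type} {f : (G → 𝔸) → G → β} (hf : Loc f) (p : fr.P) (b : Bool) :
    Loc (fun x g => f x (fr.mvf (fun p g => E (x g) p) p b g)) :=
  hf.moved (Loc.val fun a => fr.mv p b (E a p))

theorem loc_mul {β : Type} {f : (G → 𝔸) → G → β} (hf : Loc f) (t : G) :
    Loc (fun x g => f x (g * t)) :=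
  hf.moved (Loc.val fun _ => t)

theorem loc_pos {β : Type} {f : (G → 𝔸) → G → β} (hf : Loc f) (p : fr.P) (i : ℕ) :
    Loc (fun x g => f x (fr.pos (fun p g => E (x g) p) p i g)) := by
  induction i generalizing f with
  | zero => exact loc_mvf E hf p true
  | succ i ih =>
    simp only [pos_succ]
    exact ih (loc_mvf E hf p false)

theorem loc_rule (v : C → BW fr.T L → Bool) (Bot : C → Prop) (Lf : C → C → Prop)
    (R : C → C → C → C → Prop) (τ : 𝔸 → fr.P → BW fr.T L → Bool)
    (κ : 𝔸 → fr.P → fr.P → Option C) :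
    Loc (fun (x : G → 𝔸) g => fr.RuleAt v Bot Lf R (fun p g => E (x g) p) (fun p g => τ (x g) p)
      (fun p q g => κ (x g) p q) g) := by
  have := fr.finP
  have := fr.finT
  have hE : ∀ p, Loc (fun (x : G → 𝔸) g => E (x g) p) := fun p => Loc.val fun a => E a p
  have hτ : ∀ p, Loc (fun (x : G → 𝔸) g => τ (x g) p) := fun p => Loc.val fun a => τ a p
  have hκ : ∀ p q, Loc (fun (x : G → 𝔸) g => κ (x g) p q) := fun p q => Loc.val fun a => κ a p q
  refine Loc.map2 ?_ (Loc.map2 ?_ (Loc.map2 ?_ (Loc.map2 ?_ (Loc.map2 ?_ (Loc.map2 ?_ ?_ And) And)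
    And) And) And) And
  · refine Loc.all fun p => Loc.all fun q => Loc.all fun k => Loc.all fun s => Loc.imp _ fun _ => ?_
    exact (loc_mul (hE p) _).map2 (hE p) Eq
  · refine Loc.all fun t => ?_
    exact (loc_mul (hE _) _).map2 (hE _) Eq
  · refine Loc.all fun p => Loc.all fun q => Loc.imp _ fun _ => ?_
    exact (loc_mvf E (loc_mvf E (hκ p q) p true) q true).map fun o => o ≠ none
  · refine Loc.all fun p => Loc.all fun q => Loc.imp _ fun _ => ?_
    have h12 := (hκ p q).map2 (loc_mvf E (hκ p q) p false) Prod.mk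
    have h34 := (loc_mvf E (hκ p q) q false).map2
      (loc_mvf E (loc_mvf E (hκ p q) p false) q false) Prod.mk
    exact h12.map2 h34 fun a b => K2 R a.1 a.2 b.1 b.2
  · refine Loc.all fun p => Loc.all fun q => Loc.imp _ fun _ => ?_
    exact (loc_mvf E (hκ p q) q true).map2 (hτ p) (K3 v Bot)
  · refine Loc.all fun p => Loc.all fun q => Loc.imp _ fun _ => ?_
    have h12 := (loc_mvf E (hκ p q) p true).map2
      (loc_mvf E (loc_mvf E (hκ p q) q false) p true) Prod.mk
    exact h12.map2 (hτ q) fun a b => K4 v Lf a.1 a.2 b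
  · refine Loc.all fun t => ?_
    exact (hτ _).map2 (loc_mul (hτ _) _) (K5 t)

end locality

/-- A group with a frame is self-simulable. -/
theorem selfSimulable (fr : Frame G) : SelfSimulable G := by
  classical
  rintro X act ⟨m, s, hXc, hact, hs1, hgen, hY⟩
  have hm : NeZero m := ⟨by obtain ⟨i, -⟩ := hs1; have := i.2; omega⟩
  have := fr.finP
  have := fr.finT
  choose w0 hw0 using fun i => fr.gen (s i)⁻¹
  let L : ℕ := Finset.univ.sup fun i => (w0 i).length
  let wd : Fin m → BW fr.T L := fun i =>
    ⟨w0 i, Finset.le_sup (f := fun i => (w0 i).length) (Finset.mem_univ i)⟩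
  obtain ⟨C, hCfin, v, Bot, Lf, R, hC1, hC2⟩ :=
    exists_grid (D := BW fr.T L → Bool) (SetRep s act X) hY (fun d i => d (wd i))
  obtain ⟨k, ⟨ε⟩⟩ := Finite.exists_equiv_fin
    ((fr.P → Bool) × (fr.P → BW fr.T L → Bool) × (fr.P → fr.P → Option C))
  let E : Fin k → fr.P → Bool := fun a => (ε.symm a).1
  let τ : Fin k → fr.P → BW fr.T L → Bool := fun a => (ε.symm a).2.1
  let κ : Fin k → fr.P → fr.P → Option C := fun a => (ε.symm a).2.2
  let φ : (G → Fin k) → ℕ → Bool := fun x n =>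
    τ (x (fr.pos (fun p g => E (x g) p) fr.p0 (m * n) 1)) fr.p0 (nilW fr.T L)
  have hS := fun (x : G → Fin k) (hx : ∀ g, fr.RuleAt v Bot Lf R (fun p g => E (x g) p)
      (fun p g => τ (x g) p) (fun p q g => κ (x g) p q) g) =>
    sound (X := X) (act := act) (s := s) wd hw0 hact hs1 hgen hC1 hx fr.p0
  refine ⟨k, {x | ∀ g, fr.RuleAt v Bot Lf R (fun p g => E (x g) p)
      (fun p g => τ (x g) p) (fun p q g => κ (x g) p q) g}, φ, (loc_rule E v Bot Lf R τ κ).isSFT,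
      ?_, ?_, ?_, ?_⟩
  · apply Continuous.continuousOn
    refine continuous_pi fun n => ?_
    have h1 : Loc (fun (x : G → Fin k) g => τ (x g) fr.p0 (nilW fr.T L)) :=
      Loc.val fun a => τ a fr.p0 (nilW fr.T L)
    exact (loc_pos E h1 fr.p0 (m * n)).continuous 1
  · intro x hx
    exact (hS x hx).1 1
  · intro x hx
    obtain ⟨τ', κ', h1, h2⟩ := complete (fr := fr) wd hw0 hact hC2 hx
    refine ⟨fun g => ε (fun p => fr.eps p g, fun p => τ' p g, fun p q => κ' p q g), ?_, ?_⟩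
    · intro g
      simpa [E, τ, κ] using h1 g
    · simpa [φ, E, τ] using h2 fr.p0
  · intro g x hx
    have h1 := (hS x hx).2 g 1
    rw [one_mul] at h1
    refine Eq.trans ?_ h1
    funext n
    simp only [φ, shift]
    rw [pos_shift (e := fun p g => E (x g) p) g (fun p h => rfl), mul_one]

end Frame

end SelfSim


/-! ### Generation of `SL n ℤ` by elementary matrices -/

namespace SelfSim

section Gen

open Matrix

variable {n : ℕ}

theorem transv_mem (S : Submonoid (Matrix (Fin n) (Fin n) ℤ))
    (hS : ∀ i j : Fin n, i ≠ j → transvection i j (1 : ℤ) ∈ S ∧ transvection i j (-1 : ℤ) ∈ S)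
    (i j : Fin n) (h : i ≠ j) (c : ℤ) : transvection i j c ∈ S := by
  induction c using Int.induction_on with
  | zero => rw [transvection_zero]; exact S.one_mem
  | succ k ih =>
    rw [← transvection_mul_transvection_same _ _ h]
    exact S.mul_mem ih (hS i j h).1
  | pred k ih =>
    rw [sub_eq_add_neg, ← transvection_mul_transvection_same _ _ h]
    exact S.mul_mem ih (hS i j h).2

theorem mul_transv_apply (M : Matrix (Fin n) (Fin n) ℤ) (i j : Fin n) (c : ℤ) (a b : Fin n) :
    (M * transvection i j c) a b = if b = j then M a j + c * M a i else M a b := by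
  split_ifs with h
  · subst h; rw [mul_transvection_apply_same]
  · rw [mul_transvection_apply_of_ne _ _ _ _ h]

theorem exists_rot (S : Submonoid (Matrix (Fin n) (Fin n) ℤ))
    (hS : ∀ i j : Fin n, i ≠ j → ∀ c : ℤ, transvection i j c ∈ S)
    (i j : Fin n) (h : i ≠ j) : ∃ U ∈ S, ∀ (M : Matrix (Fin n) (Fin n) ℤ) a b,
      (M * U) a b = if b = i then - M a j else if b = j then M a i else M a b := by
  refine ⟨transvection i j 1 * transvection j i (-1) * transvection i j 1,
    S.mul_mem (S.mul_mem (hS _ _ h _) (hS _ _ h.symm _)) (hS _ _ h _), ?_⟩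
  intro M a b
  rw [← Matrix.mul_assoc, ← Matrix.mul_assoc]
  simp only [mul_transv_apply]
  have h' := h.symm
  by_cases hb : b = i
  · subst hb; simp [h]
  · by_cases hj : b = j
    · subst hj; simp [h, h']
    · simp [hb, hj]

/-- Making row `k` zero to the right of the diagonal. -/
theorem row_step (S : Submonoid (Matrix (Fin n) (Fin n) ℤ))
    (hS : ∀ i j : Fin n, i ≠ j → ∀ c : ℤ, transvection i j c ∈ S) (k : Fin n) (m : ℕ) :
    ∀ (M : Matrix (Fin n) (Fin n) ℤ), (∀ i j, i < k → i < j → M i j = 0) →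
    (∑ j ∈ Finset.univ.filter (fun j => k ≤ j), (M k j).natAbs) = m →
    ∃ U ∈ S, ∀ i j, i ≤ k → i < j → (M * U) i j = 0 := by
  induction m using Nat.strong_induction_on with
  | _ m ih =>
  intro M hM hm
  by_cases hex : ∃ a b, k ≤ a ∧ k ≤ b ∧ a ≠ b ∧ M k a ≠ 0 ∧ (M k a).natAbs ≤ (M k b).natAbs
  · obtain ⟨a, b, ha, hb, hab, h0, hle⟩ := hex
    obtain ⟨c, hc⟩ : ∃ c : ℤ, (M k b + c * M k a).natAbs < (M k b).natAbs := by
      rcases lt_or_gt_of_ne h0 with h | h <;> rcases le_or_gt (M k b) 0 with h2 | h2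
      · exact ⟨-1, by omega⟩
      · exact ⟨1, by omega⟩
      · exact ⟨1, by omega⟩
      · exact ⟨-1, by omega⟩
    have e1 : (∑ j ∈ Finset.univ.filter (fun j => k ≤ j),
        ((M * transvection a b c) k j).natAbs) < m := by
      rw [← hm]
      apply Finset.sum_lt_sum
      · intro j _
        rw [mul_transv_apply]
        split_ifs with h
        · subst h; exact hc.le
        · exact le_rfl
      · refine ⟨b, by simp [hb], ?_⟩
        rw [mul_transv_apply]
        simpa using hc
    have e2 : ∀ i j, i < k → i < j → (M * transvection a b c) i j = 0 := by
      intro i j hi hj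
      rw [mul_transv_apply]
      split_ifs with h
      · subst h
        rw [hM i j hi hj, hM i a hi (lt_of_lt_of_le hi ha)]; simp
      · exact hM i j hi hj
    obtain ⟨U, hU, hUz⟩ := ih _ e1 (M * transvection a b c) e2 rfl
    exact ⟨transvection a b c * U, S.mul_mem (hS _ _ hab _) hU, by
        simpa only [← Matrix.mul_assoc] using hUz⟩
  · push Not at hex
    by_cases hz : ∃ a, k < a ∧ M k a ≠ 0
    · obtain ⟨a, ha, h0⟩ := hz
      obtain ⟨U, hU, hUM⟩ := exists_rot S hS k a ha.ne
      refine ⟨U, hU, ?_⟩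
      intro i j hi hj
      rw [hUM]
      have hkz : ∀ b, k ≤ b → b ≠ a → M k b = 0 := by
        intro b hb hba
        have := hex a b ha.le hb (Ne.symm hba) h0
        by_contra hne
        have := hex b a hb ha.le hba hne
        omega
      rcases lt_or_eq_of_le hi with h | h
      · split_ifs with h1 h2
        · rw [hM i a h (h.trans ha)]; simp
        · rw [hM i k h h]
        · exact hM i j h hj
      · subst h
        rw [if_neg (ne_of_gt hj)]
        split_ifs with h2
        · exact hkz _ le_rfl ha.ne
        · exact hkz _ hj.le h2
    · push Not at hz
      refine ⟨1, S.one_mem, ?_⟩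
      intro i j hi hj
      rw [Matrix.mul_one]
      rcases lt_or_eq_of_le hi with h | h
      · exact hM i j h hj
      · subst h; exact hz j hj

theorem lower_step (S : Submonoid (Matrix (Fin n) (Fin n) ℤ))
    (hS : ∀ i j : Fin n, i ≠ j → ∀ c : ℤ, transvection i j c ∈ S)
    (M : Matrix (Fin n) (Fin n) ℤ) (k : ℕ) (hk : k ≤ n) :
    ∃ U ∈ S, ∀ i j : Fin n, (i : ℕ) < k → i < j → (M * U) i j = 0 := by
  induction k with
  | zero => exact ⟨1, S.one_mem, fun i j h => absurd h (by omega)⟩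
  | succ k ih =>
    obtain ⟨U, hU, h⟩ := ih (by omega)
    obtain ⟨V, hV, h'⟩ := row_step S hS ⟨k, by omega⟩ _ (M * U)
      (fun i j hi hj => h i j hi hj) rfl
    refine ⟨U * V, S.mul_mem hU hV, ?_⟩
    intro i j hi hj
    rw [← Matrix.mul_assoc]
    exact h' i j (by rw [Fin.le_def]; simp; omega) hj

/-- Clearing below the diagonal. -/
theorem clear_row (S : Submonoid (Matrix (Fin n) (Fin n) ℤ))
    (hS : ∀ i j : Fin n, i ≠ j → ∀ c : ℤ, transvection i j c ∈ S) (k : Fin n)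
    (M : Matrix (Fin n) (Fin n) ℤ) (hM : ∀ i j, i < j → M i j = 0)
    (hd : M k k * M k k = 1)
    (hM' : ∀ i j, i < k → i ≠ j → M i j = 0) (m : ℕ) (hm : m ≤ k) :
    ∃ U ∈ S, (∀ i j, i < j → (M * U) i j = 0) ∧ (∀ i, (M * U) i i = M i i) ∧
      (∀ i j, i < k → i ≠ j → (M * U) i j = 0) ∧ (∀ j : Fin n, (j : ℕ) < m → (M * U) k j = 0) := by
  induction m with
  | zero => 
    refine ⟨1, S.one_mem, ?_⟩
    rw [Matrix.mul_one]
    exact ⟨hM, fun _ => rfl, hM', fun j h => absurd h (by omega)⟩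
  | succ m ih =>
    obtain ⟨U, hU, h1, h2, h3, h4⟩ := ih (by omega)
    set N := M * U
    have hmn : m < n := by have := k.2; omega
    let a : Fin n := ⟨m, hmn⟩
    have hak : a < k := by rw [Fin.lt_def]; simp [a]; omega
    refine ⟨U * transvection k a (-(N k a * N k k)), S.mul_mem hU (hS _ _ hak.ne' _), ?_⟩
    rw [← Matrix.mul_assoc, show M * U = N from rfl]
    simp only [mul_transv_apply]
    refine ⟨?_, ?_, ?_, ?_⟩
    · intro i j hij
      split_ifs with h
      · subst h; rw [h1 i a hij, h1 i k (hij.trans hak)]; simp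
      · exact h1 i j hij
    · intro i
      split_ifs with h
      · subst h; rw [h1 a k hak, h2]; simp
      · exact h2 i
    · intro i j hi hij
      split_ifs with h
      · subst h; rw [h3 i a hi hij, h1 i k hi]; simp
      · exact h3 i j hi hij
    · intro j hj
      split_ifs with h
      · have : N k k * N k k = 1 := by rw [h2]; exact hd
        linear_combination (- N k a) * this
      · apply h4
        have : (j : ℕ) ≠ m := fun e => h (Fin.ext e)
        omega

theorem diag_step (S : Submonoid (Matrix (Fin n) (Fin n) ℤ))
    (hS : ∀ i j : Fin n, i ≠ j → ∀ c : ℤ, transvection i j c ∈ S)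
    (M : Matrix (Fin n) (Fin n) ℤ) (hM : ∀ i j, i < j → M i j = 0)
    (hd : ∀ k, M k k * M k k = 1) (k : ℕ) (hk : k ≤ n) :
    ∃ U ∈ S, (∀ i j, i < j → (M * U) i j = 0) ∧ (∀ i, (M * U) i i = M i i) ∧
      (∀ i j : Fin n, (i : ℕ) < k → i ≠ j → (M * U) i j = 0) := by
  induction k with
  | zero =>
    refine ⟨1, S.one_mem, ?_⟩
    rw [Matrix.mul_one]
    exact ⟨hM, fun _ => rfl, fun i j h => absurd h (by omega)⟩
  | succ k ih =>
    obtain ⟨U, hU, h1, h2, h3⟩ := ih (by omega)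
    obtain ⟨V, hV, g1, g2, g3, g4⟩ := clear_row S hS ⟨k, by omega⟩ (M * U) h1
      (by rw [h2]; exact hd _) (fun i j hi hj => h3 i j hi hj) k le_rfl
    refine ⟨U * V, S.mul_mem hU hV, ?_⟩
    rw [← Matrix.mul_assoc]
    refine ⟨g1, fun i => (g2 i).trans (h2 i), ?_⟩
    intro i j hi hij
    rcases Nat.lt_succ_iff_lt_or_eq.1 hi with h | h
    · exact g3 i j h hij
    · rw [show i = ⟨k, by omega⟩ from Fin.ext h] at hij ⊢
      rcases lt_or_gt_of_ne hij with h' | h'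
      · exact g1 _ _ h'
      · exact g4 j h'

theorem sign_step (S : Submonoid (Matrix (Fin n) (Fin n) ℤ))
    (hS : ∀ i j : Fin n, i ≠ j → ∀ c : ℤ, transvection i j c ∈ S) (m : ℕ) :
    ∀ (d : Fin n → ℤ), (∀ i, d i = 1 ∨ d i = -1) → (∏ i, d i) = 1 →
    (Finset.univ.filter (fun i => d i = -1)).card = m →
    ∃ U ∈ S, diagonal d * U = 1 := by
  induction m using Nat.strong_induction_on with
  | _ m ih =>
  intro d hd hp hm
  by_cases h1 : ∃ i, d i = -1
  · obtain ⟨i, hi⟩ := h1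
    have h2 : ∃ j, j ≠ i ∧ d j = -1 := by
      by_contra hcon
      push Not at hcon
      rw [Fintype.prod_eq_single i (fun x hx => (hd x).resolve_right (hcon x hx)), hi] at hp
      norm_num at hp
    obtain ⟨j, hji, hj⟩ := h2
    obtain ⟨U, hU, hUM⟩ := exists_rot S hS i j hji.symm
    let d' : Fin n → ℤ := fun b => if b = i then 1 else if b = j then 1 else d b
    have key : diagonal d * (U * U) = diagonal d' := by
      rw [← Matrix.mul_assoc]
      ext a b
      rw [hUM, hUM, hUM, hUM]
      have hij := hji.symm
      simp only [diagonal_apply, d']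
      by_cases hb : b = i
      · subst hb
        by_cases hab : a = b
        · subst hab; simp [hji, hi]
        · simp [hji, hab]
      · by_cases hbj : b = j
        · subst hbj
          by_cases hab : a = b
          · subst hab; simp [hij, hji, hj]
          · simp [hji, hab]
        · by_cases hab : a = b
          · subst hab; simp [hb, hbj]
          · simp [hb, hbj, hab]
    have e1 : (Finset.univ.filter (fun i => d' i = -1)).card < m := by
      rw [← hm]
      apply Finset.card_lt_card
      rw [Finset.ssubset_iff_of_subset]
      · exact ⟨i, by simp [hi], by simp [d']⟩
      · intro b
        simp only [Finset.mem_filter, Finset.mem_univ, true_and, d']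
        split_ifs
        · intro h; norm_num at h
        · intro h; norm_num at h
        · exact id
    have e2 : ∀ b, d' b = 1 ∨ d' b = -1 := by
      intro b
      simp only [d']
      split_ifs
      · exact Or.inl rfl
      · exact Or.inl rfl
      · exact hd b
    have e3 : ∏ b, d' b = 1 := by
      have hdd : ∀ b, d b = d' b * ((if b = i then -1 else 1) * (if b = j then -1 else 1)) := by
        intro b
        simp only [d']
        by_cases hb : b = i
        · subst hb; simp [hi, hji.symm]
        · by_cases hbj : b = j
          · subst hbj; simp [hj, hji]
          · simp [hb, hbj]
      rw [Finset.prod_congr rfl (fun b _ => hdd b), Finset.prod_mul_distrib,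
        Finset.prod_mul_distrib] at hp
      simpa using hp
    obtain ⟨V, hV, hVM⟩ := ih _ e1 d' e2 e3 rfl
    refine ⟨U * U * V, S.mul_mem (S.mul_mem hU hU) hV, ?_⟩
    rw [← Matrix.mul_assoc, key, hVM]
  · push Not at h1
    refine ⟨1, S.one_mem, ?_⟩
    have : d = fun _ => 1 := funext fun i => (hd i).resolve_right (h1 i)
    rw [this, Matrix.mul_one]
    exact diagonal_one

theorem exists_mul_eq_one (S : Submonoid (Matrix (Fin n) (Fin n) ℤ))
    (hS : ∀ i j : Fin n, i ≠ j → transvection i j (1 : ℤ) ∈ S ∧ transvection i j (-1 : ℤ) ∈ S)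
    (M : Matrix (Fin n) (Fin n) ℤ) (hM : M.det = 1) : ∃ U ∈ S, M * U = 1 := by
  classical
  -- restrict to determinant one
  let S' : Submonoid (Matrix (Fin n) (Fin n) ℤ) := S ⊓ (MonoidHom.mker (detMonoidHom))
  have hS' : ∀ i j : Fin n, i ≠ j → ∀ c : ℤ, transvection i j c ∈ S' := fun i j h c =>
    ⟨transv_mem S hS i j h c, by
      rw [SetLike.mem_coe, MonoidHom.mem_mker]; exact det_transvection_of_ne _ _ h c⟩
  have hdet : ∀ U ∈ S', U.det = 1 := fun U hU => by
    have := hU.2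
    rwa [SetLike.mem_coe, MonoidHom.mem_mker] at this
  obtain ⟨U, hU, h1⟩ := lower_step S' hS' M n le_rfl
  have hlow : ∀ i j, i < j → (M * U) i j = 0 := fun i j hij => h1 i j i.2 hij
  have hprod : ∏ i, (M * U) i i = 1 := by
    rw [← det_of_isLowerTriangular (M * U) (fun i j hij => hlow i j (by simpa using hij)),
      det_mul, hM, hdet U hU, mul_one]
  have hunit : ∀ k, (M * U) k k = 1 ∨ (M * U) k k = -1 := fun k => by
    apply Int.isUnit_iff.1
    apply isUnit_of_dvd_one
    rw [← hprod]
    exact Finset.dvd_prod_of_mem (fun i => (M * U) i i) (Finset.mem_univ k)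
  obtain ⟨V, hV, _, g2, g3⟩ := diag_step S' hS' (M * U) hlow
    (fun k => by rcases hunit k with h | h <;> rw [h] <;> norm_num) n le_rfl
  have hdiag : M * U * V = diagonal (fun i => (M * U) i i) := by
    ext i j
    rw [diagonal_apply]
    split_ifs with h
    · subst h; exact g2 i
    · exact g3 i j i.2 h
  obtain ⟨W, hW, hfin⟩ := sign_step S' hS' _ (fun i => (M * U) i i) hunit hprod rfl
  refine ⟨U * V * W, S.mul_mem (S.mul_mem hU.1 hV.1) hW.1, ?_⟩
  rw [← Matrix.mul_assoc, ← Matrix.mul_assoc, hdiag, hfin]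

end Gen

end SelfSim

/-! ### The frame of `GL n ℤ` and `SL n ℤ` -/

namespace SelfSim

section MkFrame

open Matrix

/-- Ordered pairs of distinct indices. -/
abbrev PairIdx (n : ℕ) : Type := {p : Fin n × Fin n // p.1 ≠ p.2}

/-- Disjointness of the supports. -/
def PairIdx.Dj {n : ℕ} (p q : PairIdx n) : Prop :=
  p.1.1 ≠ q.1.1 ∧ p.1.1 ≠ q.1.2 ∧ p.1.2 ≠ q.1.1 ∧ p.1.2 ≠ q.1.2

theorem PairIdx.exists_avoid {n : ℕ} (s : Finset (Fin n)) (hs : s.card + 2 ≤ n) :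
    ∃ p : PairIdx n, p.1.1 ∉ s ∧ p.1.2 ∉ s := by
  have h : 1 < sᶜ.card := by rw [Finset.card_compl, Fintype.card_fin]; omega
  obtain ⟨a, ha, b, hb, hab⟩ := Finset.one_lt_card.1 h
  exact ⟨⟨(a, b), hab⟩, Finset.mem_compl.1 ha, Finset.mem_compl.1 hb⟩

theorem PairIdx.Dj.symm {n : ℕ} {p q : PairIdx n} (h : p.Dj q) : q.Dj p :=
  ⟨h.1.symm, h.2.2.1.symm, h.2.1.symm, h.2.2.2.symm⟩

theorem PairIdx.exists_dj {n : ℕ} (hn : 5 ≤ n) (p : PairIdx n) : ∃ q : PairIdx n, p.Dj q := by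
  obtain ⟨q, h1, h2⟩ := PairIdx.exists_avoid {p.1.1, p.1.2}
    (by have := Finset.card_le_two (a := p.1.1) (b := p.1.2); omega)
  simp only [Finset.mem_insert, Finset.mem_singleton, not_or] at h1 h2
  exact ⟨q, fun e => h1.1 e.symm, fun e => h2.1 e.symm, fun e => h1.2 e.symm, fun e => h2.2 e.symm⟩

theorem PairIdx.conn {n : ℕ} (hn : 5 ≤ n) (p q : PairIdx n) :
    Relation.ReflTransGen PairIdx.Dj p q := by
  by_cases h : p.Dj q
  · exact Relation.ReflTransGen.single h
  · have h3 : ({p.1.1, p.1.2, q.1.1, q.1.2} : Finset (Fin n)).card ≤ 3 := by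
      have h' : p.1.1 = q.1.1 ∨ p.1.1 = q.1.2 ∨ p.1.2 = q.1.1 ∨ p.1.2 = q.1.2 := by
        unfold PairIdx.Dj at h
        tauto
      rcases h' with h' | h' | h' | h'
      · rw [Finset.insert_eq_of_mem (by simp [h'])]; exact Finset.card_le_three
      · rw [Finset.insert_eq_of_mem (by simp [h'])]; exact Finset.card_le_three
      · rw [Finset.insert_comm, Finset.insert_eq_of_mem (by simp [h'])]
        exact Finset.card_le_three
      · rw [Finset.insert_comm, Finset.insert_eq_of_mem (by simp [h'])]
        exact Finset.card_le_three
    obtain ⟨r, h1, h2⟩ := PairIdx.exists_avoid _ (le_trans (Nat.add_le_add_right h3 2) hn)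
    simp only [Finset.mem_insert, Finset.mem_singleton, not_or] at h1 h2
    have a : p.Dj r := ⟨fun e => h1.1 e.symm, fun e => h2.1 e.symm, fun e => h1.2.1 e.symm,
      fun e => h2.2.1 e.symm⟩
    have b : r.Dj q := ⟨h1.2.2.1, h1.2.2.2, h2.2.2.1, h2.2.2.2⟩
    exact (Relation.ReflTransGen.single a).tail b

/-- The sign attached to a Boolean. -/
def bsgn (s : Bool) : ℤ := if s then 1 else -1

/-- Swapping a pair. -/
def PairIdx.swap {n : ℕ} (p : PairIdx n) : PairIdx n := ⟨(p.1.2, p.1.1), p.2.symm⟩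

/-- Column inner product. -/
def colIP {n : ℕ} (M : Matrix (Fin n) (Fin n) ℤ) (i j : Fin n) : ℤ := ∑ r, M r i * M r j

theorem colIP_comm {n : ℕ} (M : Matrix (Fin n) (Fin n) ℤ) (i j : Fin n) :
    colIP M i j = colIP M j i := Finset.sum_congr rfl fun _ _ => mul_comm _ _

theorem transv_commute {n : ℕ} {i j k l : Fin n} (h1 : j ≠ k) (h2 : l ≠ i) (c d : ℤ) :
    Commute (transvection i j c) (transvection k l d) := by
  unfold Commute SemiconjBy transvection
  rw [add_mul, mul_add, mul_add, add_mul, mul_add, mul_add,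
    single_mul_single_of_ne _ _ _ _ h1, single_mul_single_of_ne _ _ _ _ h2]
  simp only [one_mul, mul_one]
  abel

/-- The sign matrix. -/
def signMat {n : ℕ} (i : Fin n) : Matrix (Fin n) (Fin n) ℤ :=
  diagonal (Function.update 1 i (-1))

theorem mul_signMat_apply {n : ℕ} (M : Matrix (Fin n) (Fin n) ℤ) (i a b : Fin n) (h : b ≠ i) :
    (M * signMat i) a b = M a b := by
  rw [signMat, mul_diagonal, Function.update_of_ne h]; simp

theorem signMat_commute {n : ℕ} {i j k : Fin n} (h1 : i ≠ k) (h2 : j ≠ k) (c : ℤ) :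
    Commute (transvection i j c) (signMat k) := by
  unfold Commute SemiconjBy
  ext a b
  rw [signMat, mul_diagonal, diagonal_mul]
  by_cases ha : a = k
  · subst ha
    by_cases hb : b = a
    · subst hb; ring
    · simp [transvection, Matrix.single, h1, hb, Ne.symm hb, one_apply]
  · by_cases hb : b = k
    · subst hb
      simp [transvection, Matrix.single, h2, ha, one_apply]
    · rw [Function.update_of_ne ha, Function.update_of_ne hb]; simp

/-- A pair of moves has disjoint images. -/
theorem move_inj_aux {n : ℕ} (M M' : Matrix (Fin n) (Fin n) ℤ) (i j : Fin n) (hij : i ≠ j)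
    (hj : 0 < colIP M j j) (hi : 0 < colIP M' i i) (s s' : Bool)
    (hs : 0 ≤ bsgn s * colIP M i j) (hs' : 0 ≤ bsgn s' * colIP M' i j)
    (h : M * transvection i j (bsgn s) = M' * transvection j i (bsgn s')) : False := by
  have sq : ∀ s, bsgn s * bsgn s = 1 := by intro s; cases s <;> rfl
  have hji := hij.symm
  have e1 : ∀ r, M r i = M' r i + bsgn s' * M' r j := by
    intro r
    have := congrFun (congrFun h r) i
    rw [mul_transv_apply, mul_transv_apply, if_neg hij, if_pos rfl] at this
    exact this
  have e2 : ∀ r, M r j + bsgn s * M r i = M' r j := by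
    intro r
    have := congrFun (congrFun h r) j
    rw [mul_transv_apply, mul_transv_apply, if_neg hji, if_pos rfl] at this
    exact this
  have f1 : colIP M i i = colIP M' i i + 2 * (bsgn s' * colIP M' i j) + colIP M' j j := by
    unfold colIP
    rw [Finset.mul_sum, Finset.mul_sum, ← Finset.sum_add_distrib, ← Finset.sum_add_distrib]
    refine Finset.sum_congr rfl fun r _ => ?_
    rw [e1 r]
    linear_combination (M' r j * M' r j) * sq s'
  have f2 : colIP M' j j = colIP M j j + 2 * (bsgn s * colIP M i j) + colIP M i i := by
    unfold colIP
    rw [Finset.mul_sum, Finset.mul_sum, ← Finset.sum_add_distrib, ← Finset.sum_add_distrib]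
    refine Finset.sum_congr rfl fun r _ => ?_
    rw [← e2 r]
    linear_combination (M r i * M r i) * sq s
  linarith

theorem move_inj_sign {n : ℕ} (M M' : Matrix (Fin n) (Fin n) ℤ) (i j : Fin n) (hij : i ≠ j)
    (hs : 0 ≤ colIP M i j) (hs' : colIP M' i j < 0)
    (h : M * transvection i j 1 = M' * transvection i j (-1)) : False := by
  have e1 : ∀ r, M r i = M' r i := by
    intro r
    have := congrFun (congrFun h r) i
    rwa [mul_transv_apply, mul_transv_apply, if_neg hij, if_neg hij] at this
  have e2 : ∀ r, M r j + 1 * M r i = M' r j + (-1) * M' r i := by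
    intro r
    have := congrFun (congrFun h r) j
    rwa [mul_transv_apply, mul_transv_apply, if_pos rfl, if_pos rfl] at this
  have f1 : colIP M' i j = colIP M i j + 2 * colIP M i i := by
    unfold colIP
    rw [Finset.mul_sum, ← Finset.sum_add_distrib]
    refine Finset.sum_congr rfl fun r _ => ?_
    rw [← e1 r]
    have := e2 r
    rw [← e1 r] at this
    linear_combination (- M r i) * this
  have : 0 ≤ colIP M i i := Finset.sum_nonneg fun r _ => mul_self_nonneg _
  linarith

variable {n : ℕ} {G : Type} [Group G]

/-- The sign chosen by a matrix at a pair. -/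
noncomputable def epsOf (f : G →* Matrix (Fin n) (Fin n) ℤ) (p : PairIdx n) (g : G) : Bool :=
  decide (0 ≤ colIP (f g) p.1.1 p.1.2)

theorem epsOf_spec (f : G →* Matrix (Fin n) (Fin n) ℤ) (p : PairIdx n) (g : G) :
    0 ≤ bsgn (epsOf f p g) * colIP (f g) p.1.1 p.1.2 := by
  unfold epsOf bsgn
  by_cases h : 0 ≤ colIP (f g) p.1.1 p.1.2
  · simp [h]
  · simp [h]; omega

theorem epsOf_congr (f : G →* Matrix (Fin n) (Fin n) ℤ) (p : PairIdx n) (g h : G)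
    (h1 : ∀ r, f h r p.1.1 = f g r p.1.1) (h2 : ∀ r, f h r p.1.2 = f g r p.1.2) :
    epsOf f p h = epsOf f p g := by
  unfold epsOf colIP
  simp only [h1, h2]

theorem colIP_pos (f : G →* Matrix (Fin n) (Fin n) ℤ) (g : G) (j : Fin n) :
    0 < colIP (f g) j j := by
  have h0 : 0 ≤ colIP (f g) j j := Finset.sum_nonneg fun r _ => mul_self_nonneg _
  rcases lt_or_eq_of_le h0 with h | h
  · exact h
  · exfalso
    have hz : ∀ r, f g r j = 0 := by
      intro r
      have := (Finset.sum_eq_zero_iff_of_nonneg (fun r _ => mul_self_nonneg (f g r j))).1 h.symm r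
        (Finset.mem_univ r)
      exact mul_self_eq_zero.1 this
    have h1 : f g⁻¹ * f g = 1 := by rw [← map_mul]; simp
    have h2 := congrFun (congrFun h1 j) j
    rw [mul_apply] at h2
    simp [hz] at h2

/-- The moves. -/
def mvOf (E : PairIdx n → Bool → G) (p : PairIdx n) (k s : Bool) : G :=
  if k then E p s else E p.swap s

theorem mvOf_inj (f : G →* Matrix (Fin n) (Fin n) ℤ) (hf : Function.Injective f)
    (E : PairIdx n → Bool → G) (hE : ∀ p s, f (E p s) = transvection p.1.1 p.1.2 (bsgn s))
    (p : PairIdx n) (k k' : Bool) (g g' : G)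
    (h : g * mvOf E p k (epsOf f p g) = g' * mvOf E p k' (epsOf f p g')) : k = k' ∧ g = g' := by
  have hF := congrArg f h
  rw [map_mul, map_mul] at hF
  have key : ∀ q : PairIdx n, (q = p ∨ q = p.swap) →
      g * E q (epsOf f p g) = g' * E q (epsOf f p g') → g = g' := by
    intro q hq hh
    have hc : ∀ g, colIP (f g) q.1.1 q.1.2 = colIP (f g) p.1.1 p.1.2 := by
      intro g
      rcases hq with rfl | rfl
      · rfl
      · exact colIP_comm _ _ _
    by_cases he : epsOf f p g = epsOf f p g'
    · rw [he] at hh; exact mul_right_cancel hh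
    · exfalso
      have hF := congrArg f hh
      rw [map_mul, map_mul, hE, hE] at hF
      by_cases h1 : 0 ≤ colIP (f g) p.1.1 p.1.2
      · by_cases h2 : 0 ≤ colIP (f g') p.1.1 p.1.2
        · exact he (by simp [epsOf, h1, h2])
        · have a1 : epsOf f p g = true := by simp [epsOf, h1]
          have a2 : epsOf f p g' = false := by simp [epsOf, h2]
          rw [a1, a2] at hF
          exact move_inj_sign (f g) (f g') _ _ q.2 (by rw [hc]; exact h1)
            (by rw [hc]; omega) hF
      · by_cases h2 : 0 ≤ colIP (f g') p.1.1 p.1.2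
        · have a1 : epsOf f p g = false := by simp [epsOf, h1]
          have a2 : epsOf f p g' = true := by simp [epsOf, h2]
          rw [a1, a2] at hF
          exact move_inj_sign (f g') (f g) _ _ q.2 (by rw [hc]; exact h2)
            (by rw [hc]; omega) hF.symm
        · exact he (by simp [epsOf, h1, h2])
  cases k <;> cases k'
  · exact ⟨rfl, key p.swap (Or.inr rfl) h⟩
  · exfalso
    simp only [mvOf, Bool.false_eq_true, if_false, if_true, hE] at hF
    exact move_inj_aux (f g') (f g) _ _ p.2 (colIP_pos f _ _) (colIP_pos f _ _) _ _
      (epsOf_spec f p g') (epsOf_spec f p g) hF.symm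
  · exfalso
    simp only [mvOf, Bool.false_eq_true, if_false, if_true, hE] at hF
    exact move_inj_aux (f g) (f g') _ _ p.2 (colIP_pos f _ _) (colIP_pos f _ _) _ _
      (epsOf_spec f p g) (epsOf_spec f p g') hF
  · exact ⟨rfl, key p (Or.inl rfl) h⟩

theorem mvOf_cases (E : PairIdx n → Bool → G) (p : PairIdx n) (k s : Bool) :
    mvOf E p k s = E p s ∨ mvOf E p k s = E p.swap s := by
  cases k
  · right; rfl
  · left; rfl

/-- The frame attached to a group of integer matrices. -/
noncomputable def mkFrame (hn : 5 ≤ n) (f : G →* Matrix (Fin n) (Fin n) ℤ)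
    (hf : Function.Injective f)
    (E : PairIdx n → Bool → G) (hE : ∀ p s, f (E p s) = transvection p.1.1 p.1.2 (bsgn s))
    (X : Type) [Finite X] (i0 : Fin n) (d : X → G) (hd : ∀ x, f (d x) = signMat i0)
    (gen : ∀ g : G, ∃ w : List ((PairIdx n × Bool) ⊕ X),
      (w.map (Sum.elim (fun a => E a.1 a.2) d)).prod = g) : Frame G := by
  have hcE : ∀ p q : PairIdx n, p.Dj q → ∀ s s', Commute (E p s) (E q s') := by
    intro p q h s s'
    apply hf
    rw [map_mul, map_mul, hE, hE]
    exact transv_commute h.2.2.1 h.2.1.symm _ _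
  have hsw : ∀ p q : PairIdx n, p.Dj q → p.swap.Dj q := fun p q h => ⟨h.2.2.1, h.2.2.2, h.1, h.2.1⟩
  have hsw' : ∀ p q : PairIdx n, p.Dj q → p.Dj q.swap := fun p q h => ⟨h.2.1, h.1, h.2.2.2, h.2.2.1⟩
  have hcmE : ∀ p q : PairIdx n, p.Dj q → ∀ k s s', Commute (mvOf E p k s) (E q s') := by
    intro p q h k s s'
    rcases mvOf_cases E p k s with e | e <;> rw [e]
    · exact hcE _ _ h _ _
    · exact hcE _ _ (hsw _ _ h) _ _
  have heE : ∀ p q : PairIdx n, p.Dj q → ∀ g s, epsOf f p (g * E q s) = epsOf f p g := by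
    intro p q h g s
    apply epsOf_congr
    · intro r; rw [map_mul, hE, mul_transv_apply, if_neg h.2.1]
    · intro r; rw [map_mul, hE, mul_transv_apply, if_neg h.2.2.2]
  have hex0 : ∃ p : PairIdx n, p.1.1 ≠ i0 ∧ p.1.2 ≠ i0 := by
    obtain ⟨p, h1, h2⟩ := PairIdx.exists_avoid {i0} (by simp; omega)
    exact ⟨p, by simpa using h1, by simpa using h2⟩
  exact
  { P := PairIdx n
    T := (PairIdx n × Bool) ⊕ X
    finP := inferInstance
    finT := inferInstance
    p0 := hex0.choose
    Dj := PairIdx.Dj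
    symm := fun p q h => h.symm
    mv := mvOf E
    eps := epsOf f
    tm := Sum.elim (fun a => E a.1 a.2) d
    pt := Sum.elim (fun a => (PairIdx.exists_dj hn a.1).choose) (fun _ => hex0.choose)
    comm := by
      intro p q h k s k' s'
      rcases mvOf_cases E q k' s' with e | e <;> rw [e]
      · exact hcmE _ _ h _ _ _
      · exact hcmE _ _ (hsw' _ _ h) _ _ _
    eps_mv := by
      intro p q h g k s
      rcases mvOf_cases E q k s with e | e <;> rw [e]
      · exact heE _ _ h _ _
      · exact heE _ _ (hsw' _ _ h) _ _
    commT := by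
      rintro (⟨a, b⟩ | x) k s
      · exact hcmE _ _ (PairIdx.exists_dj hn a).choose_spec.symm _ _ _
      · obtain ⟨h1, h2⟩ := hex0.choose_spec
        apply hf
        change f (mvOf E hex0.choose k s * d x) = f (d x * mvOf E hex0.choose k s)
        rw [map_mul, map_mul, hd]
        rcases mvOf_cases E hex0.choose k s with e | e <;> rw [e, hE]
        · exact signMat_commute h1 h2 _
        · exact signMat_commute h2 h1 _
    epsT := by
      rintro (⟨a, b⟩ | x) g
      · exact heE _ _ (PairIdx.exists_dj hn a).choose_spec.symm _ _
      · obtain ⟨h1, h2⟩ := hex0.choose_spec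
        change epsOf f hex0.choose (g * d x) = epsOf f hex0.choose g
        apply epsOf_congr
        · intro r; rw [map_mul, hd, mul_signMat_apply _ _ _ _ h1]
        · intro r; rw [map_mul, hd, mul_signMat_apply _ _ _ _ h2]
    inj := fun p k k' g g' h => mvOf_inj f hf E hE p k k' g g' h
    gen := gen
    conn := PairIdx.conn hn
    nbr := PairIdx.exists_dj hn }

theorem group_main (hn : 5 ≤ n) (f : G →* Matrix (Fin n) (Fin n) ℤ)
    (hf : Function.Injective f)
    (E : PairIdx n → Bool → G) (hE : ∀ p s, f (E p s) = transvection p.1.1 p.1.2 (bsgn s))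
    (X : Type) [Finite X] (i0 : Fin n) (d : X → G) (hd : ∀ x, f (d x) = signMat i0)
    (hdet : ∀ g, (f g).det = 1 ∨ ((f g).det = -1 ∧ Nonempty X)) :
    Group.FG G ∧ SelfSimulable G := by
  classical
  let tm : (PairIdx n × Bool) ⊕ X → G := Sum.elim (fun a => E a.1 a.2) d
  let H : Submonoid G := MonoidHom.mrange (FreeMonoid.lift tm)
  have htm : ∀ t, tm t ∈ H := fun t => ⟨FreeMonoid.of t, by simp⟩
  have hgen1 : ∀ g : G, (f g).det = 1 → ∃ u ∈ H, g * u = 1 := by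
    intro g hg
    obtain ⟨U, hU, h1⟩ := exists_mul_eq_one (H.map f) (by
      intro i j hij
      refine ⟨⟨E ⟨(i, j), hij⟩ true, htm (Sum.inl (⟨(i, j), hij⟩, true)), hE _ _⟩,
        ⟨E ⟨(i, j), hij⟩ false, htm (Sum.inl (⟨(i, j), hij⟩, false)), hE _ _⟩⟩) (f g) hg
    obtain ⟨u, hu, rfl⟩ := hU
    refine ⟨u, hu, hf ?_⟩
    rw [map_mul, map_one]; exact h1
  have hgen2 : ∀ g : G, ∃ u ∈ H, g * u = 1 := by
    intro g
    rcases hdet g with h | ⟨h, ⟨x⟩⟩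
    · exact hgen1 g h
    · obtain ⟨u, hu, h1⟩ := hgen1 (g * d x) (by
        rw [map_mul, det_mul, h, hd, signMat, det_diagonal, Finset.prod_update_of_mem
          (Finset.mem_univ _)]
        simp)
      exact ⟨d x * u, H.mul_mem (htm (Sum.inr x)) hu, by rw [← mul_assoc]; exact h1⟩
  have hgen3 : ∀ g : G, g ∈ H := by
    intro g
    obtain ⟨u, hu, h⟩ := hgen2 g⁻¹
    rwa [inv_mul_eq_one.1 h]
  constructor
  · rw [Group.fg_iff]
    refine ⟨Set.range tm, ?_, Set.finite_range tm⟩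
    rw [eq_top_iff]
    intro g _
    have h := hgen3 g
    rw [show H = Submonoid.closure (Set.range tm) from FreeMonoid.mrange_lift tm] at h
    exact Subgroup.le_closure_toSubmonoid _ h
  · refine (mkFrame hn f hf E hE X i0 d hd ?_).selfSimulable
    intro g
    obtain ⟨w, hw⟩ := hgen3 g
    exact ⟨w.toList, by rw [← hw, FreeMonoid.lift_apply]⟩

end MkFrame

open Matrix in
theorem sl_main (n : ℕ) (hn : 5 ≤ n) :
    Group.FG (SpecialLinearGroup (Fin n) ℤ) ∧ SelfSimulable (SpecialLinearGroup (Fin n) ℤ) := by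
  refine group_main hn
    { toFun := fun g => g.1, map_one' := rfl, map_mul' := fun _ _ => rfl }
    Subtype.val_injective
    (fun p s => ⟨transvection p.1.1 p.1.2 (bsgn s), det_transvection_of_ne _ _ p.2 _⟩)
    (fun _ _ => rfl) Empty ⟨0, by omega⟩ (fun x => x.elim) (fun x => x.elim)
    (fun g => Or.inl g.2)

open Matrix in
theorem gl_main (n : ℕ) (hn : 5 ≤ n) :
    Group.FG (GeneralLinearGroup (Fin n) ℤ) ∧ SelfSimulable (GeneralLinearGroup (Fin n) ℤ) := by
  have hsq : signMat (⟨0, by omega⟩ : Fin n) * signMat ⟨0, by omega⟩ = 1 := by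
    rw [signMat, diagonal_mul_diagonal, ← diagonal_one]
    congr 1
    funext i
    by_cases h : i = ⟨0, by omega⟩
    · subst h; simp
    · rw [Function.update_of_ne h]; simp
  refine group_main hn (Units.coeHom _) Units.val_injective
    (fun p s => ⟨transvection p.1.1 p.1.2 (bsgn s), transvection p.1.1 p.1.2 (- bsgn s),
      by rw [transvection_mul_transvection_same _ _ p.2, add_neg_cancel, transvection_zero],
      by rw [transvection_mul_transvection_same _ _ p.2, neg_add_cancel, transvection_zero]⟩)
    (fun _ _ => rfl) Unit ⟨0, by omega⟩ (fun _ => ⟨signMat _, signMat _, hsq, hsq⟩) (fun _ => rfl)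
    (fun g => ?_)
  have hu : IsUnit (g : Matrix (Fin n) (Fin n) ℤ).det := (Matrix.isUnit_iff_isUnit_det _).1 g.isUnit
  rcases Int.isUnit_iff.1 hu with h | h
  · exact Or.inl h
  · exact Or.inr ⟨h, ⟨()⟩⟩

end SelfSim

namespace SelfSim

/-- For `n ≥ 5`, `GL n ℤ` and `SL n ℤ` are finitely generated and
self-simulable. -/
theorem gl_sl_selfSimulable (n : ℕ) (hn : 5 ≤ n) :
    (Group.FG (Matrix.GeneralLinearGroup (Fin n) ℤ) ∧
      SelfSimulable (Matrix.GeneralLinearGroup (Fin n) ℤ)) ∧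
    (Group.FG (Matrix.SpecialLinearGroup (Fin n) ℤ) ∧
      SelfSimulable (Matrix.SpecialLinearGroup (Fin n) ℤ)) :=
  ⟨gl_main n hn, sl_main n hn⟩

end SelfSim
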